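/- arXiv:2007.12111 — 2 statements merged into one kernel-verified Lean document; each statement's English description precedes it below -/
import Mathlib

section
/- Let r ≥ 2 be an integer and let ε > 0, and let p : ℕ → [0,1] be a function satisfying n·p(n) − log n → ∞ as n → ∞. Then, as n → ∞ through even integers, with high probability the random graph G ~ G(n, p(n)) has the following property: for every r-colouring of the edges of G there exist a colour i ∈ {1,…,r} and a perfect matching of G containing at least (1/(r+1) − ε)·n edges of colour i. -/
open scoped Classical in
/-- The probability, under the binomial random graph `G(n,p)`, that a graph
property `P` holds. Each of the `n.choose 2` possible edges is present
independently with probability `p`. -/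
noncomputable def gnpProb (n : ℕ) (p : ℝ) (P : SimpleGraph (Fin n) → Prop) : ℝ :=
  ∑ G : SimpleGraph (Fin n),
    (if P G then p ^ G.edgeSet.ncard * (1 - p) ^ (n.choose 2 - G.edgeSet.ncard) else 0)

namespace PMC
open Finset
open scoped Classical

noncomputable def topE (n : ℕ) : Finset (Sym2 (Fin n)) := (⊤ : SimpleGraph (Fin n)).edgeFinset

noncomputable def ed {n : ℕ} (G : SimpleGraph (Fin n)) : Finset (Sym2 (Fin n)) := G.edgeFinset

lemma mem_ed {n : ℕ} (G : SimpleGraph (Fin n)) (e) : e ∈ ed G ↔ e ∈ G.edgeSet := by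
  simp [ed]

lemma mem_topE {n : ℕ} (e : Sym2 (Fin n)) : e ∈ topE n ↔ ¬ e.IsDiag := by
  simp [topE]

lemma card_topE (n : ℕ) : (topE n).card = n.choose 2 := by
  unfold topE
  rw [SimpleGraph.card_edgeFinset_top_eq_card_choose_two]; simp

lemma ed_subset {n : ℕ} (G : SimpleGraph (Fin n)) : ed G ⊆ topE n := by
  intro e he
  rw [mem_ed] at he
  rw [mem_topE]
  exact G.not_isDiag_of_mem_edgeSet he

lemma ncard_ed {n : ℕ} (G : SimpleGraph (Fin n)) : G.edgeSet.ncard = (ed G).card := by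
  unfold ed
  rw [← SimpleGraph.coe_edgeFinset, Set.ncard_coe_finset]

/-- weighted sum over subsets -/
noncomputable def ES {α : Type*} (E : Finset α) (p : ℝ) (F : Finset α → ℝ) : ℝ :=
  ∑ A ∈ E.powerset, p ^ A.card * (1 - p) ^ (E.card - A.card) * F A

lemma sum_graph (n : ℕ) (p : ℝ) (F : Finset (Sym2 (Fin n)) → ℝ) :
    ∑ G : SimpleGraph (Fin n), p ^ G.edgeSet.ncard * (1 - p) ^ (n.choose 2 - G.edgeSet.ncard)
      * F (ed G) = ES (topE n) p F := by
  unfold ES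
  refine Finset.sum_bij' (fun G _ => ed G) (fun A _ => SimpleGraph.fromEdgeSet (A : Set _)) ?_ ?_ ?_ ?_ ?_
  · intro G _
    simp [ed_subset]
  · simp
  · intro G _
    simp [ed]
  · intro A hA
    ext e
    rw [mem_ed]
    simp only [SimpleGraph.edgeSet_fromEdgeSet]
    have := fun h => (mem_topE e).1 ((Finset.mem_powerset.1 hA) h)
    simp
    tauto
  · intro G _
    rw [ncard_ed, card_topE]

lemma gnp_eq (n : ℕ) (p : ℝ) (P : SimpleGraph (Fin n) → Prop) :
    gnpProb n p P = ES (topE n) p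
      (fun A => if P (SimpleGraph.fromEdgeSet (A : Set _)) then 1 else 0) := by
  rw [← sum_graph]
  unfold gnpProb
  refine Finset.sum_congr rfl fun G _ => ?_
  have : SimpleGraph.fromEdgeSet (ed G : Set (Sym2 (Fin n))) = G := by simp [ed]
  rw [this]
  split_ifs <;> simp

lemma ES_insert {α : Type*} (E : Finset α) (e : α) (he : e ∉ E) (p : ℝ) (F : Finset α → ℝ) :
    ES (insert e E) p F = (1 - p) * ES E p F + p * ES E p (fun A => F (insert e A)) := by
  unfold ES
  rw [Finset.sum_powerset_insert he, Finset.mul_sum, Finset.mul_sum]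
  congr 1
  · refine Finset.sum_congr rfl fun A hA => ?_
    have h := Finset.card_le_card (Finset.mem_powerset.1 hA)
    rw [Finset.card_insert_of_notMem he, Nat.succ_sub h, pow_succ]
    ring
  · refine Finset.sum_congr rfl fun A hA => ?_
    have h := (Finset.mem_powerset.1 hA)
    rw [Finset.card_insert_of_notMem he, Finset.card_insert_of_notMem (fun h' => he (h h')),
      Nat.add_sub_add_right, pow_succ]
    ring

lemma ES_mono_F {α : Type*} (E : Finset α) (p : ℝ) (h0 : 0 ≤ p) (h1 : p ≤ 1)
    (F F' : Finset α → ℝ) (h : ∀ A, A ⊆ E → F A ≤ F' A) : ES E p F ≤ ES E p F' := by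
  unfold ES
  refine Finset.sum_le_sum fun A hA => ?_
  have : 0 ≤ 1 - p := by linarith
  have := h A (Finset.mem_powerset.1 hA)
  gcongr

lemma ES_mono_p {α : Type*} (E : Finset α) (p q : ℝ) (h0 : 0 ≤ p) (hpq : p ≤ q) (h1 : q ≤ 1) :
    ∀ (F : Finset α → ℝ) (_ : ∀ A B, A ⊆ B → F A ≤ F B), ES E p F ≤ ES E q F := by
  induction E using Finset.induction_on with
  | empty => intro F hF; simp [ES]
  | insert e E he ih =>
    intro F hF
    rw [ES_insert E e he, ES_insert E e he]
    have i1 := ih F hF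
    have i2 := ih (fun A => F (insert e A)) (fun A B h => hF _ _ (Finset.insert_subset_insert _ h))
    have i3 : ES E p F ≤ ES E p (fun A => F (insert e A)) :=
      ES_mono_F E p h0 (by linarith) _ _ (fun A _ => hF _ _ (Finset.subset_insert _ _))
    nlinarith

lemma ES_prod {α : Type*} (E : Finset α) (p : ℝ) : ∀ (f : α → ℝ),
    ES E p (fun A => ∏ e ∈ A, f e) = ∏ e ∈ E, (1 - p + p * f e) := by
  induction E using Finset.induction_on with
  | empty => intro f; simp [ES]
  | insert e E he ih =>
    intro f
    rw [ES_insert E e he, Finset.prod_insert he, ← ih]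
    have : ES E p (fun A => ∏ e ∈ insert e A, f e) = f e * ES E p (fun A => ∏ e ∈ A, f e) := by
      unfold ES
      rw [Finset.mul_sum]
      refine Finset.sum_congr rfl fun A hA => ?_
      have h2 := Finset.prod_insert (f := f) (fun h' => he ((Finset.mem_powerset.1 hA) h'))
      simp only [h2]
      ring
    rw [this]; ring

lemma gnp_mono_p (n : ℕ) (p q : ℝ) (h0 : 0 ≤ p) (hpq : p ≤ q) (h1 : q ≤ 1)
    (P : SimpleGraph (Fin n) → Prop) (hP : ∀ G H, G ≤ H → P G → P H) :
    gnpProb n p P ≤ gnpProb n q P := by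
  rw [gnp_eq, gnp_eq]
  apply ES_mono_p _ _ _ h0 hpq h1
  intro A B hAB
  have := hP (SimpleGraph.fromEdgeSet (A : Set _)) (SimpleGraph.fromEdgeSet (B : Set _))
    (SimpleGraph.fromEdgeSet_mono (by exact_mod_cast hAB))
  split_ifs <;> first | tauto | norm_num

lemma gnp_le_one (n : ℕ) (p : ℝ) (h0 : 0 ≤ p) (h1 : p ≤ 1) (P : SimpleGraph (Fin n) → Prop) :
    gnpProb n p P ≤ 1 := by
  rw [gnp_eq]
  calc _ ≤ ES (topE n) p (fun A => ∏ e ∈ A, (fun _ => 1) e) := by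
        apply ES_mono_F _ _ h0 h1
        intro A _
        split_ifs <;> simp
    _ = 1 := by rw [ES_prod]; simp

/-- first-moment bound -/
lemma gnp_union {ι : Type*} (n : ℕ) (p : ℝ) (h0 : 0 ≤ p) (h1 : p ≤ 1)
    (Q : SimpleGraph (Fin n) → Prop) (J : Finset ι) (c : ι → ℝ) (f : ι → Sym2 (Fin n) → ℝ)
    (hc : ∀ j ∈ J, 0 ≤ c j) (hf : ∀ j ∈ J, ∀ e, 0 ≤ f j e)
    (hQ : ∀ G, Q G → ∃ j ∈ J, 1 ≤ c j * ∏ e ∈ ed G, f j e) :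
    gnpProb n p Q ≤ ∑ j ∈ J, c j * ∏ e ∈ topE n, (1 - p + p * f j e) := by
  have key : ∑ j ∈ J, c j * ∏ e ∈ topE n, (1 - p + p * f j e)
      = ES (topE n) p (fun A => ∑ j ∈ J, c j * ∏ e ∈ A, f j e) := by
    simp_rw [← ES_prod]
    unfold ES
    simp_rw [Finset.mul_sum]
    rw [Finset.sum_comm]
    refine Finset.sum_congr rfl fun A _ => Finset.sum_congr rfl fun j _ => by ring
  rw [key, ← sum_graph]
  unfold gnpProb
  refine Finset.sum_le_sum fun G _ => ?_
  have hw : 0 ≤ p ^ G.edgeSet.ncard * (1 - p) ^ (n.choose 2 - G.edgeSet.ncard) := by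
    have : 0 ≤ 1 - p := by linarith
    positivity
  have hnn : ∀ j ∈ J, 0 ≤ c j * ∏ e ∈ ed G, f j e := fun j hj =>
    mul_nonneg (hc j hj) (Finset.prod_nonneg fun e _ => hf j hj e)
  split_ifs with hG
  · obtain ⟨j, hj, hj1⟩ := hQ G hG
    have : 1 ≤ ∑ j ∈ J, c j * ∏ e ∈ ed G, f j e :=
      hj1.trans (Finset.single_le_sum hnn hj)
    nlinarith
  · exact mul_nonneg hw (Finset.sum_nonneg hnn)

lemma gnp_or (n : ℕ) (p : ℝ) (h0 : 0 ≤ p) (h1 : p ≤ 1)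
    (P : SimpleGraph (Fin n) → Prop) (l : List (SimpleGraph (Fin n) → Prop))
    (h : ∀ G, (∀ Q ∈ l, ¬ Q G) → P G) :
    1 - (l.map (gnpProb n p)).sum ≤ gnpProb n p P := by
  induction l generalizing P with
  | nil =>
    have : gnpProb n p P = 1 := by
      rw [gnp_eq]
      have := ES_prod (topE n) p (fun _ => 1)
      simp only [Finset.prod_const_one, mul_one, sub_add_cancel] at this
      refine Eq.trans ?_ this
      unfold ES
      refine Finset.sum_congr rfl fun A _ => ?_
      simp only [if_pos (h (SimpleGraph.fromEdgeSet (A : Set _)) (by simp))]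
    simp [this]
  | cons Q l ih =>
    have := ih (fun G => P G ∨ Q G) (fun G hG => by
      by_cases hQ : Q G
      · exact Or.inr hQ
      · exact Or.inl (h G (by simpa [hQ] using hG)))
    have h2 : gnpProb n p (fun G => P G ∨ Q G) ≤ gnpProb n p P + gnpProb n p Q := by
      unfold gnpProb
      rw [← Finset.sum_add_distrib]
      refine Finset.sum_le_sum fun G _ => ?_
      have hw : 0 ≤ p ^ G.edgeSet.ncard * (1 - p) ^ (n.choose 2 - G.edgeSet.ncard) := by
        have : 0 ≤ 1 - p := by linarith
        positivity
      by_cases h1 : P G <;> by_cases h2 : Q G <;> simp [h1, h2, hw]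
    simp only [List.map_cons, List.sum_cons]
    linarith
end PMC

namespace PMC
open Finset
open scoped Classical

/-- join with `d` universal vertices -/
def joinG {V : Type*} (G : SimpleGraph V) (d : ℕ) : SimpleGraph (V ⊕ Fin d) where
  Adj x y := x ≠ y ∧ ∀ u v, x = Sum.inl u → y = Sum.inl v → G.Adj u v
  symm := ⟨fun x y h => ⟨h.1.symm, fun u v hx hy => (h.2 v u hy hx).symm⟩⟩
  loopless := ⟨fun x h => h.1 rfl⟩

lemma pm_invol {V : Type*} (G : SimpleGraph V) (M : G.Subgraph) (hM : M.IsPerfectMatching) :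
    ∃ f : V → V, Function.Involutive f ∧ ∀ v, G.Adj v (f v) := by
  have h : ∀ v, ∃! w, M.Adj v w := fun v => hM.1 (hM.2 v)
  choose f hf hu using h
  refine ⟨f, fun v => ?_, fun v => M.adj_sub (hf v)⟩
  exact (hu (f v) v (hf v).symm).symm

theorem berge {V : Type*} [Fintype V] (G : SimpleGraph V) (d : ℕ)
    (hpar : Even (Fintype.card V + d))
    (h : ∀ f : V → V, Function.Involutive f → (∀ v, f v ≠ v → G.Adj v (f v)) →
      d < #{v | f v = v}) :
    ∃ (S : Finset V) (g : V → ℕ) (O : Finset ℕ),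
      (∀ x y, x ∉ S → y ∉ S → G.Adj x y → g x = g y) ∧
      (∀ c ∈ O, Odd (#{v | v ∉ S ∧ g v = c})) ∧ #S + d < #O := by
  set H := joinG G d with hH
  have hno : ¬ ∃ M : H.Subgraph, M.IsPerfectMatching := by
    rintro ⟨M, hM⟩
    obtain ⟨f, hf, hfa⟩ := pm_invol H M hM
    let f' : V → V := fun v => Sum.elim id (fun _ => v) (f (Sum.inl v))
    have hcase : ∀ v, (∃ w, f (Sum.inl v) = Sum.inl w ∧ f' v = w ∧ w ≠ v) ∨
        (∃ j, f (Sum.inl v) = Sum.inr j ∧ f' v = v) := by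
      intro v
      rcases hv : f (Sum.inl v) with w | j
      · left
        refine ⟨w, rfl, by simp [f', hv], ?_⟩
        rintro rfl
        exact (hfa (Sum.inl w)).1 hv.symm
      · right
        exact ⟨j, rfl, by simp [f', hv]⟩
    have h1 := h f' ?_ ?_
    · have : #{v | f' v = v} ≤ d := by
        have hx : ∀ v, f' v = v → ∃ j, f (Sum.inl v) = Sum.inr j := by
          intro v hv
          rcases hcase v with ⟨w, h1, h2, h3⟩ | ⟨j, h1, _⟩
          · exact absurd (h2.symm.trans hv) h3
          · exact ⟨j, h1⟩
        by_cases hd : Nonempty (Fin d)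
        · choose! j hj using hx
          calc _ ≤ #(univ : Finset (Fin d)) := by
                apply Finset.card_le_card_of_injOn j (by simp)
                intro v hv w hw hvw
                simp at hv hw
                have := (hj v hv).trans ((congrArg Sum.inr hvw).trans (hj w hw).symm)
                exact Sum.inl_injective (hf.injective this)
            _ = d := by simp
        · have : ({v | f' v = v} : Finset V) = ∅ := by
            ext v
            simp
            intro hv
            obtain ⟨j, _⟩ := hx v hv
            exact hd ⟨j⟩
          rw [this]; simp
      omega
    · intro v
      rcases hcase v with ⟨w, h1, h2, h3⟩ | ⟨j, h1, h2⟩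
      · have : f (Sum.inl w) = Sum.inl v := by rw [← h1, hf]
        rw [h2]
        simp [f', this]
      · rw [h2, h2]
    · intro v hv
      rcases hcase v with ⟨w, h1, h2, h3⟩ | ⟨j, h1, h2⟩
      · rw [h2]
        exact (hfa (Sum.inl v)).2 v w rfl h1
      · exact absurd h2 hv
  rw [SimpleGraph.tutte] at hno
  push Not at hno
  obtain ⟨u, hu⟩ := hno
  unfold SimpleGraph.IsTutteViolator at hu
  set K := ((⊤ : H.Subgraph).deleteVerts u) with hK
  have hadj : ∀ (x y : K.verts), x ≠ y → (∀ a b, x.1 = Sum.inl a → y.1 = Sum.inl b → G.Adj a b) →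
      K.coe.Adj x y := by
    intro x y hxy hab
    have hx := x.2
    have hy := y.2
    simp [hK] at hx hy
    simp [hK, hx, hy, hH, joinG]
    exact ⟨fun h => hxy (Subtype.ext h), hab⟩
  have hparH : Even (Nat.card (V ⊕ Fin d)) := by simpa using hpar
  by_cases hall : ∀ j : Fin d, Sum.inr j ∈ u
  swap
  · -- H - u connected
    exfalso
    push Not at hall
    obtain ⟨j, hj⟩ := hall
    have hjm : Sum.inr j ∈ K.verts := by simp [hK, hj]
    have hconn : ∀ c : K.coe.ConnectedComponent, c = K.coe.connectedComponentMk ⟨_, hjm⟩ := by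
      intro c
      induction c using SimpleGraph.ConnectedComponent.ind with
      | h x =>
        by_cases hx : x = ⟨_, hjm⟩
        · rw [hx]
        · apply SimpleGraph.ConnectedComponent.sound
          apply SimpleGraph.Adj.reachable
          apply hadj _ _ hx
          intro a b _ hb
          simp at hb
    have hle : K.coe.oddComponents.ncard ≤ 1 := by
      rw [Set.ncard_le_one_iff]
      intro a b _ _
      rw [hconn a, hconn b]
    have hu0 : u.ncard = 0 := by omega
    have h1 : K.coe.oddComponents.ncard = 1 := by omega
    rw [Set.ncard_eq_zero] at hu0
    have := (SimpleGraph.odd_ncard_oddComponents K.coe).1 (by rw [h1]; exact odd_one)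
    have hc : Nat.card K.verts = Nat.card (V ⊕ Fin d) := by
      rw [hK, hu0]
      simp
    rw [hc] at this
    exact (Nat.not_odd_iff_even.2 hparH) this
  · let S : Finset V := {v | Sum.inl v ∈ u}
    have hmem : ∀ v, v ∉ S → Sum.inl v ∈ K.verts := by
      intro v hv
      simpa [S, hK] using hv
    obtain ⟨N, ⟨eqv⟩⟩ := Finite.exists_equiv_fin K.coe.ConnectedComponent
    let g : V → ℕ := fun v => if hv : v ∉ S then
      (eqv (K.coe.connectedComponentMk ⟨_, hmem v hv⟩) : ℕ) else 0
    have hgv : ∀ v (hv : v ∉ S), g v = (eqv (K.coe.connectedComponentMk ⟨_, hmem v hv⟩) : ℕ) := by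
      intro v hv
      simp only [g]
      rw [dif_pos hv]
    refine ⟨S, g, (K.coe.oddComponents.toFinset).image (fun c => (eqv c : ℕ)), ?_, ?_, ?_⟩
    · intro x y hx hy hxy
      rw [hgv x hx, hgv y hy]
      congr 2
      apply SimpleGraph.ConnectedComponent.sound
      apply SimpleGraph.Adj.reachable
      apply hadj
      · intro hh
        have := Sum.inl_injective (congrArg Subtype.val hh)
        exact hxy.ne this
      · intro a b ha hb
        have ha := Sum.inl_injective ha
        have hb := Sum.inl_injective hb
        rwa [← ha, ← hb]
    · intro c hc
      simp only [Finset.mem_image, Set.mem_toFinset] at hc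
      obtain ⟨C, hC, rfl⟩ := hc
      have hC : Odd C.supp.ncard := hC
      have : C.supp.ncard = #{v | v ∉ S ∧ g v = (eqv C : ℕ)} := by
        rw [Set.ncard_eq_toFinset_card']
        symm
        refine Finset.card_bij (fun v hv => ⟨Sum.inl v, hmem v (by simp at hv; exact hv.1)⟩) ?_ ?_ ?_
        · intro v hv
          have hv' := (Finset.mem_filter.1 hv).2
          simp only [Set.mem_toFinset, SimpleGraph.ConnectedComponent.mem_supp_iff]
          have := hv'.2
          rw [hgv v hv'.1] at this
          exact eqv.injective (Fin.ext this)
        · intro v hv w hw hvw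
          exact Sum.inl_injective (congrArg Subtype.val hvw)
        · rintro ⟨x, hx⟩ hxC
          have hx' : x ∉ u := by simpa [hK] using hx
          rcases x with v | j
          · have hvS : v ∉ S := by simpa [S] using hx'
            refine ⟨v, ?_, rfl⟩
            simp only [Finset.mem_filter, Finset.mem_univ, true_and]
            refine ⟨hvS, ?_⟩
            rw [hgv v hvS]
            simp only [Set.mem_toFinset, SimpleGraph.ConnectedComponent.mem_supp_iff] at hxC
            rw [hxC]
          · exact absurd (hall j) hx'
      rwa [← this]
    · rw [Finset.card_image_of_injective _ (fun a b hab => eqv.injective (Fin.ext hab))]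
      rw [Set.ncard_eq_toFinset_card'] at hu
      rw [Set.ncard_eq_toFinset_card'] at hu
      have : u.toFinset.card = #S + d := by
        have : u.toFinset = S.disjSum (univ : Finset (Fin d)) := by
          ext x
          rcases x with v | j
          · simp [S]
          · simp [hall j]
        rw [this]; simp
      rw [this] at hu
      convert hu
end PMC

namespace PMC
open Finset
open scoped Classical

lemma split_one {V κ : Type*} [Countable κ] (h : V → κ) (t : ℕ) (X Y : Finset V)
    (hfib : ∀ c, #{x ∈ X | h x = c} ≤ t) :
    ∃ X' Y' : Finset V, X' ⊆ X ∧ Y' ⊆ Y ∧ (∀ x ∈ X', ∀ y ∈ Y', h x ≠ h y) ∧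
      #X ≤ 2 * #X' + 2 * t ∧ #Y ≤ 2 * #Y' := by
  obtain ⟨φ, hφ⟩ := Countable.exists_injective_nat κ
  set g : V → ℕ := fun v => φ (h v) with hg
  have hex : ∃ s, #X ≤ 2 * #{x ∈ X | g x ≤ s} := by
    refine ⟨X.sup g, ?_⟩
    have : ({x ∈ X | g x ≤ X.sup g} : Finset V) = X :=
      Finset.filter_true_of_mem fun x hx => Finset.le_sup hx
    rw [this]; omega
  set s := Nat.find hex with hs
  have hs1 : #X ≤ 2 * #{x ∈ X | g x ≤ s} := Nat.find_spec hex
  have hs2 : 2 * #{x ∈ X | g x < s} ≤ #X := by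
    rcases Nat.eq_zero_or_pos s with h0 | h0
    · rw [h0]; simp
    · have := Nat.find_min hex (m := s - 1) (by omega)
      have e : ({x ∈ X | g x < s} : Finset V) = {x ∈ X | g x ≤ s - 1} := by
        apply Finset.filter_congr; intro x _; omega
      rw [e]; omega
  have hs3 : #{x ∈ X | g x = s} ≤ t := by
    by_cases hc : ∃ c, φ c = s
    · obtain ⟨c, hc⟩ := hc
      refine le_trans (Finset.card_le_card ?_) (hfib c)
      intro x hx
      simp only [Finset.mem_filter] at hx ⊢
      exact ⟨hx.1, hφ (by rw [hc]; exact hx.2)⟩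
    · have : ({x ∈ X | g x = s} : Finset V) = ∅ := by
        apply Finset.filter_eq_empty_iff.2
        intro x _ hx
        exact hc ⟨h x, hx⟩
      rw [this]; simp
  have hXsplit : #X ≤ #{x ∈ X | g x < s} + #{x ∈ X | g x = s} + #{x ∈ X | s < g x} := by
    have : X ⊆ ({x ∈ X | g x < s} ∪ {x ∈ X | g x = s}) ∪ {x ∈ X | s < g x} := by
      intro x hx
      simp [hx]
      omega
    refine (Finset.card_le_card this).trans ((Finset.card_union_le _ _).trans ?_)
    have := Finset.card_union_le ({x ∈ X | g x < s} : Finset V) {x ∈ X | g x = s}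
    omega
  have hY := Finset.card_filter_add_card_filter_not (s := Y) (fun y => g y ≤ s)
  by_cases hc : #Y ≤ 2 * #{y ∈ Y | g y ≤ s}
  · refine ⟨{x ∈ X | s < g x}, {y ∈ Y | g y ≤ s}, by simp, by simp, ?_, by omega, hc⟩
    intro x hx y hy he
    simp only [Finset.mem_filter] at hx hy
    have : g x = g y := by simp only [hg, he]
    omega
  · refine ⟨{x ∈ X | g x ≤ s}, {y ∈ Y | ¬ g y ≤ s}, by simp, by simp, ?_, by omega, by omega⟩
    intro x hx y hy he
    simp only [Finset.mem_filter] at hx hy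
    have : g x = g y := by simp only [hg, he]
    omega

lemma split_all {V κ ι : Type*} [Countable κ] (I : Finset ι) (h : ι → V → κ) (t : ℕ)
    (X Y : Finset V) (hfib : ∀ i c, #{x ∈ X | h i x = c} ≤ t) :
    ∃ X' Y' : Finset V, X' ⊆ X ∧ Y' ⊆ Y ∧ (∀ i ∈ I, ∀ x ∈ X', ∀ y ∈ Y', h i x ≠ h i y) ∧
      #X ≤ 2 ^ #I * (#X' + 2 * t) ∧ #Y ≤ 2 ^ #I * #Y' := by
  induction I using Finset.induction_on with
  | empty => exact ⟨X, Y, by simp, by simp, by simp, by simp, by simp⟩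
  | insert i I hi ih =>
    obtain ⟨X1, Y1, hX1, hY1, hne, hcX, hcY⟩ := ih
    obtain ⟨X2, Y2, hX2, hY2, hne2, hcX2, hcY2⟩ := split_one (h i) t X1 Y1
      (fun c => (Finset.card_le_card (Finset.filter_subset_filter _ hX1)).trans (hfib i c))
    refine ⟨X2, Y2, hX2.trans hX1, hY2.trans hY1, ?_, ?_, ?_⟩
    · intro j hj x hx y hy
      rcases Finset.mem_insert.1 hj with rfl | hj
      · exact hne2 x hx y hy
      · exact hne j hj x (hX2 hx) y (hY2 hy)
    · rw [Finset.card_insert_of_notMem hi, pow_succ, mul_assoc]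
      refine hcX.trans (Nat.mul_le_mul_left _ ?_)
      omega
    · rw [Finset.card_insert_of_notMem hi, pow_succ, mul_assoc]
      exact hcY.trans (Nat.mul_le_mul_left _ hcY2)

/-- no bipartite hole of size `a` -/
def NoHole {V : Type*} (G : SimpleGraph V) (a : ℕ) : Prop :=
  ∀ X Y : Finset V, a ≤ #X → a ≤ #Y → Disjoint X Y → ∃ x ∈ X, ∃ y ∈ Y, G.Adj x y

theorem mono_matching {V : Type*} [Fintype V] (G : SimpleGraph V) (r : ℕ) (hr : 1 ≤ r)
    (c : Sym2 V → Fin r) (a k m q : ℕ) (hole : NoHole G a) (ha : 1 ≤ a)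
    (hV : Fintype.card V = 2 * m) (hk : k ≤ m) (hq : 2 * m ≤ q * a)
    (hnum : (r + 1) * k + r * q + 2 ^ r * (2 ^ r * (3 * a)) ≤ 2 * m) :
    ∃ i, ∃ f : V → V, Function.Involutive f ∧
      (∀ v, f v ≠ v → G.Adj v (f v) ∧ c s(v, f v) = i) ∧ #{v | f v = v} ≤ 2 * m - 2 * k := by
  by_contra hcon
  push Not at hcon
  let Gi : Fin r → SimpleGraph V := fun i =>
    { Adj := fun x y => G.Adj x y ∧ c s(x, y) = i
      symm := ⟨fun x y h => ⟨h.1.symm, by rw [Sym2.eq_swap]; exact h.2⟩⟩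
      loopless := ⟨fun x h => h.1.ne rfl⟩ }
  have hb : ∀ i, ∃ (S : Finset V) (g : V → ℕ) (O : Finset ℕ),
      (∀ x y, x ∉ S → y ∉ S → (Gi i).Adj x y → g x = g y) ∧
      (∀ c ∈ O, Odd (#{v | v ∉ S ∧ g v = c})) ∧ #S + (2 * m - 2 * k) < #O := by
    intro i
    refine berge (Gi i) (2 * m - 2 * k) ?_ ?_
    · rw [hV]; exact ⟨m + (m - k), by omega⟩
    · intro f hf hfa
      exact hcon i f hf hfa
  choose S g O hg hO hcard using hb
  -- big vertices
  let A : Fin r → Finset V := fun i => {v | v ∉ S i ∧ a < #{w | w ∉ S i ∧ g i w = g i v}}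
  have hA : ∀ i, #(A i) + 2 * #(S i) < 2 * k + q := by
    intro i
    let B : Finset V := {v | v ∉ S i ∧ v ∉ A i}
    let Ob : Finset ℕ := {c ∈ O i | a < #{w | w ∉ S i ∧ g i w = c}}
    let Os : Finset ℕ := {c ∈ O i | ¬ a < #{w | w ∉ S i ∧ g i w = c}}
    have h1 : #Ob + #Os = #(O i) := Finset.card_filter_add_card_filter_not _
    have h2 : #Os ≤ #B := by
      have hsub : Os ⊆ B.image (g i) := by
        intro c hc
        simp only [Os, Finset.mem_filter] at hc
        have hodd := hO i c hc.1
        obtain ⟨v, hv⟩ := Finset.card_pos.1 hodd.pos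
        simp only [Finset.mem_filter, Finset.mem_univ, true_and] at hv
        refine Finset.mem_image.2 ⟨v, ?_, hv.2⟩
        simp only [B, A, Finset.mem_filter, Finset.mem_univ, true_and, hv.2, not_and]
        exact ⟨hv.1, fun _ => hc.2⟩
      exact (Finset.card_le_card hsub).trans Finset.card_image_le
    have h3 : #Ob * a ≤ 2 * m := by
      have : ∑ c ∈ Ob, #{w | w ∉ S i ∧ g i w = c} ≤ 2 * m := by
        rw [← hV]
        rw [← Finset.card_biUnion]
        · exact Finset.card_le_univ _
        · intro x _ y _ hxy
          rw [Function.onFun, Finset.disjoint_left]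
          intro v hv hv'
          simp only [Finset.mem_filter] at hv hv'
          exact hxy (hv.2.2.symm.trans hv'.2.2)
      refine le_trans ?_ this
      rw [← smul_eq_mul]
      apply Finset.card_nsmul_le_sum
      intro c hc
      simp only [Ob, Finset.mem_filter] at hc
      exact hc.2.le
    have h3' : #Ob ≤ q := by
      have := h3.trans hq
      exact Nat.le_of_mul_le_mul_right this ha
    have h4 : #(S i) + #(A i) + #B ≤ 2 * m := by
      rw [← hV]
      have d1 : Disjoint (S i) (A i) := by
        rw [Finset.disjoint_left]; intro v hv hv'
        simp only [A, Finset.mem_filter] at hv'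
        exact hv'.2.1 hv
      have d2 : Disjoint (S i ∪ A i) B := by
        rw [Finset.disjoint_left]; intro v hv hv'
        simp only [B, Finset.mem_filter] at hv'
        rcases Finset.mem_union.1 hv with h | h
        · exact hv'.2.1 h
        · exact hv'.2.2 h
      rw [← Finset.card_union_of_disjoint d1, ← Finset.card_union_of_disjoint d2]
      exact Finset.card_le_univ _
    have := hcard i
    omega
  -- the claim
  let T : V → Finset (Fin r) := fun v => {i | v ∈ A i}
  let US : Finset V := Finset.univ.biUnion S
  have claim : ∀ X Y : Finset V, (∀ x ∈ X, x ∉ US) → (∀ y ∈ Y, y ∉ US) →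
      2 ^ r * (3 * a) ≤ #X → 2 ^ r * (3 * a) ≤ #Y → ∃ x ∈ X, ∃ y ∈ Y, ∃ i, i ∈ T x ∧ i ∈ T y := by
    intro X Y hX hY hXc hYc
    by_contra hno
    push Not at hno
    let h : Fin r → V → ℕ ⊕ V := fun i v => if v ∈ A i then Sum.inr v else Sum.inl (g i v)
    have hnS : ∀ x, x ∉ US → ∀ i, x ∉ S i := by
      intro x hx i hxi
      exact hx (Finset.mem_biUnion.2 ⟨i, Finset.mem_univ _, hxi⟩)
    obtain ⟨X', Y', hX', hY', hne, hcX, hcY⟩ := split_all (Finset.univ : Finset (Fin r)) h a X Y (by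
      intro i cc
      rcases cc with cc | w
      · by_cases hemp : ∃ v, v ∈ X ∧ h i v = Sum.inl cc
        swap
        · refine le_trans (le_of_eq (Finset.card_eq_zero.2 (Finset.eq_empty_of_forall_notMem ?_)))
            (Nat.zero_le _)
          intro v hv
          simp only [Finset.mem_filter] at hv
          exact hemp ⟨v, hv⟩
        · obtain ⟨v, hv⟩ := hemp
          simp only [h] at hv
          have hvA : v ∉ A i := by
            intro hh
            rw [if_pos hh] at hv
            simp at hv
          rw [if_neg hvA] at hv
          have hvg := Sum.inl_injective hv.2
          have : ¬ a < #{w | w ∉ S i ∧ g i w = g i v} := by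
            intro hh
            apply hvA
            simp only [A, Finset.mem_filter, Finset.mem_univ, true_and]
            exact ⟨hnS v (hX v hv.1) i, hh⟩
          refine le_trans (Finset.card_le_card ?_) (not_lt.1 this)
          intro w hw
          simp only [Finset.mem_filter, h, Finset.mem_univ, true_and] at hw ⊢
          refine ⟨hnS w (hX w hw.1) i, ?_⟩
          by_cases hwA : w ∈ A i
          · rw [if_pos hwA] at hw
            simp at hw
          · rw [if_neg hwA] at hw
            rw [hvg]
            exact Sum.inl_injective hw.2
      · refine le_trans (Finset.card_le_one.2 ?_) ha
        have key : ∀ x, h i x = Sum.inr w → x = w := by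
          intro x hx
          simp only [h] at hx
          split_ifs at hx
          exact Sum.inr_injective hx
        intro x hx y hy
        simp only [Finset.mem_filter] at hx hy
        rw [key x hx.2, key y hy.2])
    simp only [Finset.card_univ, Fintype.card_fin] at hcX hcY
    have p2 : 0 < 2 ^ r := by positivity
    have e1 : 3 * a ≤ #X' + 2 * a := Nat.le_of_mul_le_mul_left (hXc.trans hcX) p2
    have e2 : 3 * a ≤ #Y' := Nat.le_of_mul_le_mul_left (hYc.trans hcY) p2
    obtain ⟨x, hx, y, hy, hxy⟩ := hole X' Y' (by omega) (by omega) (by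
      rw [Finset.disjoint_left]
      intro v hv hv'
      exact hne ⟨0, hr⟩ (Finset.mem_univ _) v hv v hv' rfl)
    set i := c s(x, y) with hi
    have hxS := hnS x (hX x (hX' hx)) i
    have hyS := hnS y (hY y (hY' hy)) i
    have hgxy := hg i x y hxS hyS ⟨hxy, rfl⟩
    have hT := hno x (hX' hx) y (hY' hy) i
    have hh := hne i (Finset.mem_univ _) x hx y hy
    have hiff : x ∈ A i ↔ y ∈ A i := by
      simp only [A, Finset.mem_filter, Finset.mem_univ, true_and, hgxy, hxS, hyS]
    simp only [T, Finset.mem_filter, Finset.mem_univ, true_and] at hT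
    have hxA : x ∉ A i := fun hh' => hT hh' (hiff.1 hh')
    have hyA : y ∉ A i := fun hh' => hxA (hiff.2 hh')
    simp only [h] at hh
    rw [if_neg hxA, if_neg hyA, hgxy] at hh
    exact hh rfl
  -- types
  set b := 2 ^ r * (3 * a) with hbdef
  let ty : Finset (Fin r) → Finset V := fun τ => {v | v ∉ US ∧ T v = τ}
  have hty : ∀ τ, ∀ x ∈ ty τ, x ∉ US := by
    intro τ x hx
    simp only [ty, Finset.mem_filter] at hx
    exact hx.2.1
  have htyT : ∀ τ, ∀ x ∈ ty τ, T x = τ := by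
    intro τ x hx
    simp only [ty, Finset.mem_filter] at hx
    exact hx.2.2
  let trash : Finset V := {v | v ∉ US ∧ #(ty (T v)) < b}
  have htrash : #trash ≤ 2 ^ r * b := by
    have : trash ⊆ ({τ | #(ty τ) < b} : Finset (Finset (Fin r))).biUnion ty := by
      intro v hv
      simp only [trash, Finset.mem_filter, Finset.mem_univ, true_and] at hv
      refine Finset.mem_biUnion.2 ⟨T v, by simpa using hv.2, ?_⟩
      simp only [ty, Finset.mem_filter, Finset.mem_univ, true_and]
      exact ⟨hv.1, trivial⟩
    refine (Finset.card_le_card this).trans ((Finset.card_biUnion_le_card_mul _ _ b ?_).trans ?_)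
    · intro τ hτ
      simp at hτ
      exact hτ.le
    · apply Nat.mul_le_mul_right
      refine (Finset.card_le_univ _).trans ?_
      simp
  let good : Finset V := {v | v ∉ US ∧ ¬ #(ty (T v)) < b}
  have hUS : #US ≤ ∑ i, #(S i) := Finset.card_biUnion_le
  have htot : 2 * m ≤ #US + #trash + #good := by
    rw [← hV, ← Finset.card_univ]
    have : (Finset.univ : Finset V) ⊆ (US ∪ trash) ∪ good := by
      intro v _
      simp only [trash, good, Finset.mem_union, Finset.mem_filter, Finset.mem_univ, true_and]
      tauto
    refine (Finset.card_le_card this).trans ((Finset.card_union_le _ _).trans ?_)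
    have := Finset.card_union_le US trash
    omega
  have hgood : ∀ v ∈ good, ∀ w ∈ good, ∃ i, i ∈ T v ∧ i ∈ T w := by
    intro v hv w hw
    simp only [good, Finset.mem_filter, Finset.mem_univ, true_and, not_lt] at hv hw
    obtain ⟨x, hx, y, hy, i, h1, h2⟩ := claim (ty (T v)) (ty (T w)) (hty _) (hty _) hv.2 hw.2
    rw [htyT _ x hx] at h1
    rw [htyT _ y hy] at h2
    exact ⟨i, h1, h2⟩
  by_cases hcase : ∃ v ∈ good, #(T v) ≤ 1
  · obtain ⟨v, hv, hv1⟩ := hcase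
    obtain ⟨j, hj, _⟩ := hgood v hv v hv
    have hsub : good ⊆ A j := by
      intro w hw
      obtain ⟨i, h1, h2⟩ := hgood v hv w hw
      have : i = j := Finset.card_le_one.1 hv1 _ h1 _ hj
      rw [this] at h2
      simpa [T] using h2
    have h1 := Finset.card_le_card hsub
    have h2 := hA j
    have h3 : ∑ i, #(S i) ≤ #(S j) + (r - 1) * (k + q) := by
      rw [← Finset.add_sum_erase _ _ (Finset.mem_univ j)]
      apply Nat.add_le_add_left
      refine (Finset.sum_le_card_nsmul _ _ (k + q) ?_).trans ?_
      · intro i _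
        have := hA i
        omega
      · simp
    have h4 : (r + 1) * k + r * q = (r - 1) * (k + q) + 2 * k + q := by
      obtain ⟨r', rfl⟩ : ∃ r', r = r' + 1 := ⟨r - 1, by omega⟩
      simp only [Nat.add_sub_cancel]; ring
    omega
  · push Not at hcase
    have h1 : #good * 2 ≤ ∑ i, #(A i) := by
      have e : ∑ i, #(A i) = ∑ v, #(T v) := by
        simp only [T, Finset.card_eq_sum_ones, Finset.sum_filter]
        rw [Finset.sum_comm]
        refine Finset.sum_congr rfl fun i _ => ?_
        simp
      rw [e, ← smul_eq_mul]
      calc _ ≤ ∑ v ∈ good, #(T v) := Finset.card_nsmul_le_sum _ _ _ (fun v hv => hcase v hv)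
        _ ≤ _ := Finset.sum_le_sum_of_subset (Finset.subset_univ _)
    have h2 : ∑ i, (#(A i) + 2 * #(S i) + 1) ≤ r * (2 * k + q) := by
      refine (Finset.sum_le_card_nsmul _ _ (2 * k + q) ?_).trans ?_
      · intro i _
        have := hA i
        omega
      · simp
    rw [Finset.sum_add_distrib, Finset.sum_add_distrib, ← Finset.mul_sum] at h2
    simp at h2
    have h5 : r * (2 * k + q) = 2 * (r * k) + r * q := by ring
    have h6 : (r + 1) * k = r * k + k := by ring
    omega
end PMC

namespace PMC
open Finset
open scoped Classical

def Low {V : Type*} [Fintype V] (G : SimpleGraph V) (κ : ℕ) (v : V) : Prop :=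
  #{w | G.Adj v w} < κ

structure Good {V : Type*} [Fintype V] (G : SimpleGraph V) (a D κ : ℕ) : Prop where
  hole : NoHole G a
  sparse : ∀ Y : Finset V, Y.Nonempty → #Y ≤ 4 * a → ∑ y ∈ Y, #{z ∈ Y | G.Adj y z} < D * #Y
  iso : ∀ v, ∃ w, G.Adj v w
  low1 : ∀ u v, u ≠ v → Low G κ u → Low G κ v → ¬ G.Adj u v
  low2 : ∀ u v w, u ≠ v → Low G κ u → Low G κ v → G.Adj u w → G.Adj w v → False
  low4 : ∀ u v w x z, [u, w, x, z, v].Nodup → Low G κ u → Low G κ v →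
    G.Adj u w → G.Adj w x → G.Adj x z → G.Adj z v → False

theorem berge_on {V : Type*} [Fintype V] (G : SimpleGraph V) (U : Finset V) (hU : Even #U)
    (h : ¬ ∃ f : U → U, Function.Involutive f ∧ ∀ v : U, G.Adj (v : V) (f v : V)) :
    ∃ (S : Finset V) (g : V → ℕ) (O : Finset ℕ), S ⊆ U ∧
      (∀ x ∈ U \ S, ∀ y ∈ U \ S, G.Adj x y → g x = g y) ∧
      (∀ c ∈ O, ∃ v ∈ U \ S, g v = c) ∧ #S + 2 ≤ #O := by
  obtain ⟨S, g, O, h1, h2, h3⟩ := berge (G.comap (Subtype.val : U → V)) 0 (by simpa using hU) (by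
    intro f hf hfa
    by_contra hcon
    have : ({v | f v = v} : Finset U) = ∅ := by
      rw [← Finset.card_eq_zero]; convert Nat.eq_zero_of_not_pos hcon
    apply h
    refine ⟨f, hf, fun v => hfa v ?_⟩
    intro hv
    have : v ∈ ({v | f v = v} : Finset U) := by simp [hv]
    simp_all)
  let O' : Finset ℕ := {c ∈ ((Finset.univ \ S).image g) | Odd (#{v | v ∉ S ∧ g v = c})}
  have hsub : O ⊆ O' := by
    intro c hc
    have hodd := h2 c hc
    obtain ⟨v, hv⟩ := Finset.card_pos.1 hodd.pos
    simp only [Finset.mem_filter, Finset.mem_univ, true_and] at hv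
    refine Finset.mem_filter.2 ⟨Finset.mem_image.2 ⟨v, by simp [hv.1], hv.2⟩, by convert hodd⟩
  have hpar : Odd (#U - #S) ↔ Odd #O' := by
    have e : #U - #S = ∑ c ∈ (Finset.univ \ S).image g, #{v | v ∉ S ∧ g v = c} := by
      have := Finset.card_eq_sum_card_image g (Finset.univ \ S)
      rw [Finset.card_sdiff_of_subset (Finset.subset_univ _)] at this
      simp only [Finset.card_univ, Fintype.card_coe] at this
      rw [this]
      refine Finset.sum_congr rfl fun c _ => ?_
      congr 1
      ext v; simp
    rw [e]
    exact Finset.odd_sum_iff_odd_card_odd _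
  have hSU : #S ≤ #U := by
    have := Finset.card_le_univ S
    simpa using this
  have hO' : #S + 2 ≤ #O' := by
    have := Finset.card_le_card hsub
    by_contra hlt
    have e : #O' = #S + 1 := by omega
    rw [e] at hpar
    rw [Nat.odd_sub hSU] at hpar
    have := Nat.not_odd_iff_even.2 hU
    rw [Nat.odd_add_one] at hpar
    rw [← Nat.not_even_iff_odd] at hpar
    rw [← Nat.not_even_iff_odd] at hpar
    tauto
  refine ⟨S.map (Function.Embedding.subtype _), fun v => if hv : v ∈ U then g ⟨v, hv⟩ else 0, O',
    ?_, ?_, ?_, by simpa using hO'⟩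
  · intro x hx
    simp at hx
    exact hx.1
  · intro x hx y hy hxy
    simp at hx hy
    have hx2 := hx.2 hx.1
    have hy2 := hy.2 hy.1
    simp only [hx.1, hy.1, dif_pos]
    exact h1 _ _ hx2 hy2 hxy
  · intro c hc
    obtain ⟨v, hv, hvc⟩ := Finset.mem_image.1 (Finset.mem_filter.1 hc).1
    refine ⟨v, ?_, ?_⟩
    · simp at hv ⊢
      exact hv
    · simp [hvc]

theorem pm_on {V : Type*} [Fintype V] (G : SimpleGraph V) (a D κ : ℕ) (hG : Good G a D κ)
    (ha : 1 ≤ a) (hDκ : 2 * D + 2 ≤ κ) (U : Finset V) (hU : Even #U) (hUa : 3 * a ≤ #U)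
    (hdeg : ∀ v, κ ≤ #{w ∈ U | G.Adj v w} ∨ ∀ w, G.Adj v w → w ∈ U) :
    ∃ f : U → U, Function.Involutive f ∧ ∀ v : U, G.Adj (v : V) (f v : V) := by
  have hUne : #U ≠ 0 := by omega
  obtain ⟨v0, _⟩ := Finset.card_ne_zero.1 hUne
  have : Nonempty V := ⟨v0⟩
  by_contra hcon
  obtain ⟨S, g, O, hSU, hg, hO, hSO⟩ := berge_on G U hU hcon
  set Z := U \ S with hZ
  -- step 1
  have hO2 : #O < 2 * a := by
    by_contra hbig
    choose! rep hrep hrepg using hO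
    have hinj : Set.InjOn rep (O : Set ℕ) := by
      intro c hc c' hc' h
      rw [← hrepg c hc, ← hrepg c' hc', h]
    have hR : #(O.image rep) = #O := Finset.card_image_of_injOn hinj
    obtain ⟨R1, hR1, hR1c⟩ := Finset.exists_subset_card_eq (s := O.image rep) (n := a) (by omega)
    have hR2 := Finset.card_sdiff_of_subset hR1
    obtain ⟨x, hx, y, hy, hxy⟩ := hG.hole R1 (O.image rep \ R1) (by omega) (by omega)
      Finset.disjoint_sdiff
    obtain ⟨c, hc, rfl⟩ := Finset.mem_image.1 (hR1 hx)
    obtain ⟨c', hc', rfl⟩ := Finset.mem_image.1 (Finset.mem_sdiff.1 hy).1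
    have := hg _ (hrep c hc) _ (hrep c' hc') hxy
    rw [hrepg c hc, hrepg c' hc'] at this
    rw [this] at hxy
    exact hxy.ne rfl
  have hZc : a ≤ #Z := by
    rw [hZ, Finset.card_sdiff_of_subset hSU]; omega
  -- step 2
  have hex : ∃ s, a ≤ #{x ∈ Z | g x ≤ s} := by
    refine ⟨Z.sup g, ?_⟩
    have : ({x ∈ Z | g x ≤ Z.sup g} : Finset V) = Z :=
      Finset.filter_true_of_mem fun x hx => Finset.le_sup hx
    rw [this]; omega
  set t := Nat.find hex with ht
  have ht1 : a ≤ #{x ∈ Z | g x ≤ t} := Nat.find_spec hex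
  have ht2 : #{x ∈ Z | g x < t} < a := by
    rcases Nat.eq_zero_or_pos t with h0 | h0
    · rw [h0]; simp; omega
    · have := Nat.find_min hex (m := t - 1) (by omega)
      have e : ({x ∈ Z | g x < t} : Finset V) = {x ∈ Z | g x ≤ t - 1} := by
        apply Finset.filter_congr; intro x _; omega
      rw [e]; omega
  have ht3 : #{x ∈ Z | t < g x} < a := by
    by_contra hbig
    obtain ⟨x, hx, y, hy, hxy⟩ := hG.hole {x ∈ Z | g x ≤ t} {x ∈ Z | t < g x} ht1 (by omega) (by
      rw [Finset.disjoint_left]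
      intro v hv hv'
      simp only [Finset.mem_filter] at hv hv'
      omega)
    simp only [Finset.mem_filter] at hx hy
    have := hg x hx.1 y hy.1 hxy
    omega
  let X : Finset V := {x ∈ Z | g x ≠ t}
  have hXc : #X < 2 * a := by
    have : X ⊆ {x ∈ Z | g x < t} ∪ {x ∈ Z | t < g x} := by
      intro x hx
      simp only [X, Finset.mem_filter, Finset.mem_union] at hx ⊢
      have := hx.2
      have : g x < t ∨ t < g x := by omega
      tauto
    have := (Finset.card_le_card this).trans (Finset.card_union_le _ _)
    omega
  have hXZ : ∀ x ∈ X, x ∈ U ∧ x ∉ S ∧ g x ≠ t := by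
    intro x hx
    simp only [X, hZ, Finset.mem_filter, Finset.mem_sdiff] at hx
    tauto
  have hXn : ∀ x ∈ X, ∀ y ∈ U, G.Adj x y → y ∈ S ∨ (y ∈ X ∧ g y = g x) := by
    intro x hx y hy hxy
    by_cases hyS : y ∈ S
    · exact Or.inl hyS
    · right
      have hx' := hXZ x hx
      have hyZ : y ∈ Z := Finset.mem_sdiff.2 ⟨hy, hyS⟩
      have := hg x (Finset.mem_sdiff.2 ⟨hx'.1, hx'.2.1⟩) y hyZ hxy
      refine ⟨Finset.mem_filter.2 ⟨hyZ, ?_⟩, this.symm⟩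
      rw [← this]; exact hx'.2.2
  have hlowU : ∀ v, Low G κ v → ∀ w, G.Adj v w → w ∈ U := by
    intro v hv
    rcases hdeg v with h | h
    · exfalso
      have : #{w ∈ U | G.Adj v w} ≤ #{w | G.Adj v w} :=
        Finset.card_le_card (Finset.filter_subset_filter _ (Finset.subset_univ _))
      unfold Low at hv
      omega
    · exact h
  have hhigh : ∀ v, ¬ Low G κ v → κ ≤ #{w ∈ U | G.Adj v w} := by
    intro v hv
    rcases hdeg v with h | h
    · exact h
    · unfold Low at hv
      have : ({w ∈ U | G.Adj v w} : Finset V) = ({w | G.Adj v w} : Finset V) := by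
        ext w
        simp only [Finset.mem_filter, Finset.mem_univ, true_and]
        exact ⟨fun h => h.2, fun hh => ⟨h w hh, hh⟩⟩
      rw [this]; omega
  choose wn hwn using hG.iso
  let XH : Finset V := {x ∈ X | ¬ Low G κ x}
  let wL : Finset V := {w | ∃ u, Low G κ u ∧ wn u = w}
  -- step 3
  have hcl : ∀ c ∈ O.erase t, ∃ x, (x ∈ XH ∧ g x = c) ∨
      (x ∈ S ∩ wL ∧ ∃ u ∈ X, Low G κ u ∧ g u = c ∧ wn u = x) := by
    intro c hc
    rw [Finset.mem_erase] at hc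
    obtain ⟨v, hv, hvc⟩ := hO c hc.2
    have hvX : v ∈ X := Finset.mem_filter.2 ⟨hv, by rw [hvc]; exact hc.1⟩
    by_cases hlow : Low G κ v
    · have hw := hwn v
      rcases hXn v hvX (wn v) (hlowU v hlow _ hw) hw with h | ⟨h, h'⟩
      · refine ⟨wn v, Or.inr ⟨Finset.mem_inter.2 ⟨h, ?_⟩, v, hvX, hlow, hvc, rfl⟩⟩
        simp only [wL, Finset.mem_filter, Finset.mem_univ, true_and]
        exact ⟨v, hlow, rfl⟩
      · refine ⟨wn v, Or.inl ⟨Finset.mem_filter.2 ⟨h, ?_⟩, h'.trans hvc⟩⟩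
        intro hl2
        exact hG.low1 v (wn v) hw.ne hlow hl2 hw
    · exact ⟨v, Or.inl ⟨Finset.mem_filter.2 ⟨hvX, hlow⟩, hvc⟩⟩
  choose! φ hφ using hcl
  have hinj : Set.InjOn φ ((O.erase t : Finset ℕ) : Set ℕ) := by
    have hd : ∀ x, x ∈ XH → x ∈ S ∩ wL → False := fun x h1 h2 =>
      (hXZ x (Finset.mem_filter.1 h1).1).2.1 (Finset.mem_inter.1 h2).1
    intro c hc c' hc' h
    rcases hφ c hc with ⟨h1, h2⟩ | ⟨h1, u, hu, hul, huc, huw⟩ <;>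
    rcases hφ c' hc' with ⟨h1', h2'⟩ | ⟨h1', u', hu', hul', huc', huw'⟩
    · rw [← h2, ← h2', h]
    · rw [h] at h1; exact (hd _ h1 h1').elim
    · rw [h] at h1; exact (hd _ h1' h1).elim
    · by_cases huu : u = u'
      · rw [← huc, ← huc', huu]
      · exfalso
        have e1 := hwn u
        have e2 := hwn u'
        have e3 : wn u = wn u' := by rw [huw, huw', h]
        rw [← e3] at e2
        exact hG.low2 u u' (wn u) huu hul hul' e1 e2.symm
  have hcount : #S + 1 ≤ #XH + #(S ∩ wL) := by
    have h1 : #(O.erase t) ≤ #(XH ∪ S ∩ wL) := by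
      apply Finset.card_le_card_of_injOn φ _ hinj
      intro c hc
      rcases hφ c hc with ⟨h1, _⟩ | ⟨h1, _⟩
      · exact Finset.mem_coe.2 (Finset.mem_union_left _ h1)
      · exact Finset.mem_coe.2 (Finset.mem_union_right _ h1)
    have h2 := Finset.card_union_le XH (S ∩ wL)
    have h3 := Finset.pred_card_le_card_erase (s := O) (a := t)
    omega
  have hS' := Finset.card_sdiff_add_card_inter S wL
  -- step 4
  let Y : Finset V := XH ∪ (S \ wL)
  have hYc : #Y ≤ #XH + #(S \ wL) := Finset.card_union_le _ _
  have hXHX : #XH ≤ #X := Finset.card_le_card (Finset.filter_subset _ _)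
  have hYne : Y.Nonempty := by
    have : 0 < #XH := by omega
    obtain ⟨x, hx⟩ := Finset.card_pos.1 this
    exact ⟨x, Finset.mem_union_left _ hx⟩
  have hsp := hG.sparse Y hYne (by omega)
  have hdegY : ∀ x ∈ XH, κ - 2 ≤ #{z ∈ Y | G.Adj x z} := by
    intro x hx
    have hx' := Finset.mem_filter.1 hx
    have h1 := hhigh x hx'.2
    let P : Finset V := {w | Low G κ w ∧ G.Adj x w}
    let Q : Finset V := {w | w ∈ wL ∧ ¬ Low G κ w ∧ G.Adj x w}
    have hP : #P ≤ 1 := by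
      rw [Finset.card_le_one]
      intro u hu v hv
      simp only [P, Finset.mem_filter, Finset.mem_univ, true_and] at hu hv
      by_contra huv
      exact hG.low2 u v x huv hu.1 hv.1 hu.2.symm hv.2
    have hQ : #Q ≤ 1 := by
      rw [Finset.card_le_one]
      intro w hw z hz
      simp only [Q, wL, Finset.mem_filter, Finset.mem_univ, true_and] at hw hz
      obtain ⟨⟨u, hu, huw⟩, hwl, hxw⟩ := hw
      obtain ⟨⟨v, hv, hvz⟩, hzl, hxz⟩ := hz
      by_contra hwz
      have huw' : G.Adj u w := huw ▸ hwn u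
      have hvz' : G.Adj v z := hvz ▸ hwn v
      have huv : u ≠ v := by
        rintro rfl
        exact hwz (huw.symm.trans hvz)
      refine hG.low4 u v w x z ?_ hu hv huw' hxw.symm hxz hvz'.symm
      have n1 : ∀ y, Low G κ y → y ≠ x := fun y hy h => hx'.2 (h ▸ hy)
      have n2 : ∀ y, Low G κ y → y ≠ w := fun y hy h => hwl (h ▸ hy)
      have n3 : ∀ y, Low G κ y → y ≠ z := fun y hy h => hzl (h ▸ hy)
      simp only [List.nodup_cons, List.mem_cons, List.not_mem_nil, or_false, not_or,
        not_false_eq_true, List.nodup_nil, and_true]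
      exact ⟨⟨n2 u hu, n1 u hu, n3 u hu, huv⟩, ⟨hxw.ne.symm, hwz, (n2 v hv).symm⟩,
        ⟨hxz.ne, (n1 v hv).symm⟩, (n3 v hv).symm⟩
    have hsub : ({w ∈ U | G.Adj x w} : Finset V) ⊆ ({z ∈ Y | G.Adj x z} ∪ P) ∪ Q := by
      intro w hw
      rw [Finset.mem_filter] at hw
      by_cases hwl : Low G κ w
      · apply Finset.mem_union_left
        apply Finset.mem_union_right
        simp only [P, Finset.mem_filter, Finset.mem_univ, true_and]
        exact ⟨hwl, hw.2⟩
      rcases hXn x hx'.1 w hw.1 hw.2 with h | ⟨h, _⟩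
      · by_cases hwL : w ∈ wL
        · apply Finset.mem_union_right
          simp only [Q, Finset.mem_filter, Finset.mem_univ, true_and]
          exact ⟨hwL, hwl, hw.2⟩
        · apply Finset.mem_union_left
          apply Finset.mem_union_left
          exact Finset.mem_filter.2 ⟨Finset.mem_union_right _ (Finset.mem_sdiff.2 ⟨h, hwL⟩), hw.2⟩
      · apply Finset.mem_union_left
        apply Finset.mem_union_left
        exact Finset.mem_filter.2 ⟨Finset.mem_union_left _ (Finset.mem_filter.2 ⟨h, hwl⟩), hw.2⟩
    have c1 := (Finset.card_le_card hsub).trans (Finset.card_union_le _ _)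
    have c2 := Finset.card_union_le ({z ∈ Y | G.Adj x z} : Finset V) P
    omega
  have hsum : #XH * (κ - 2) ≤ ∑ y ∈ Y, #{z ∈ Y | G.Adj y z} := by
    rw [← smul_eq_mul]
    calc _ ≤ ∑ x ∈ XH, #{z ∈ Y | G.Adj x z} := Finset.card_nsmul_le_sum _ _ _ hdegY
      _ ≤ _ := Finset.sum_le_sum_of_subset Finset.subset_union_left
  have e1 : D * #Y ≤ D * (2 * #XH) := Nat.mul_le_mul_left _ (by omega)
  have e2 : #XH * (2 * D) ≤ #XH * (κ - 2) := Nat.mul_le_mul_left _ (by omega)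
  have e3 : D * (2 * #XH) = #XH * (2 * D) := by ring
  omega
end PMC

namespace PMC
open Finset
open scoped Classical

lemma even_of_invol {V : Type*} (s : Finset V) (f : V → V) (hf : Function.Involutive f)
    (hs : ∀ v ∈ s, f v ∈ s) (hne : ∀ v ∈ s, f v ≠ v) : Even #s := by
  have : ∑ v ∈ s, (1 : ZMod 2) = 0 := by
    refine Finset.sum_involution (fun v _ => f v) ?_ ?_ ?_ ?_
    · intro v _; decide
    · intro v hv _; exact hne v hv
    · intro v hv; exact hs v hv
    · intro v _; exact hf v
  simp only [Finset.sum_const, nsmul_eq_mul, mul_one] at this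
  exact (ZMod.natCast_eq_zero_iff_even).1 this

theorem extend_matching {V : Type*} [Fintype V] (G : SimpleGraph V) (a D κ : ℕ)
    (hG : Good G a D κ) (ha : 1 ≤ a) (hDκ : 2 * D + 2 ≤ κ) (hV : Even (Fintype.card V))
    (f : V → V) (hf : Function.Involutive f) (hfa : ∀ v, f v ≠ v → G.Adj v (f v))
    (W : Finset V) (hfix : ∀ v, f v = v → v ∈ W) (hWf : ∀ v ∈ W, f v ∈ W)
    (hW : a * (κ + 2) ≤ #W) :
    ∃ f' : V → V, Function.Involutive f' ∧ (∀ v, G.Adj v (f' v)) ∧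
      Fintype.card V ≤ #{v | f v ≠ v ∧ f' v = f v} + #W + 2 * (a * κ) := by
  let B : Finset V := {v | #{w ∈ W | G.Adj v w} < κ}
  have hW' : a * κ + 2 * a ≤ #W := by linarith [hW]
  have hBc : #B < a := by
    by_contra hbig
    obtain ⟨B', hB', hB'c⟩ := Finset.exists_subset_card_eq (s := B) (n := a) (by omega)
    let N : Finset V := B'.biUnion (fun v => {w ∈ W | G.Adj v w})
    have hN : #N ≤ a * κ := by
      rw [← hB'c]
      apply Finset.card_biUnion_le_card_mul
      intro v hv
      have := hB' hv
      simp only [B, Finset.mem_filter] at this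
      exact this.2.le
    have h1 := Finset.le_card_sdiff N W
    have h2 := Finset.le_card_sdiff B' (W \ N)
    obtain ⟨x, hx, y, hy, hxy⟩ := hG.hole B' ((W \ N) \ B') (by omega) (by omega)
      Finset.disjoint_sdiff
    simp only [Finset.mem_sdiff] at hy
    apply hy.1.2
    exact Finset.mem_biUnion.2 ⟨x, hx, Finset.mem_filter.2 ⟨hy.1.1, hxy⟩⟩
  have hR : ∀ v, ∃ R : Finset V, R ⊆ ({w | G.Adj v w} : Finset V) ∧
      #R = min κ (#{w | G.Adj v w}) := fun v =>
    Finset.exists_subset_card_eq (min_le_right _ _)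
  choose Rv hRv hRvc using hR
  let R := B.biUnion Rv
  have hRc : #R ≤ a * κ := by
    refine (Finset.card_biUnion_le_card_mul _ _ κ ?_).trans (Nat.mul_le_mul_right _ hBc.le)
    intro v _
    rw [hRvc]; exact min_le_left _ _
  let U := W ∪ (R ∪ R.image f)
  have hUc : #U ≤ #W + 2 * (a * κ) := by
    have h1 := Finset.card_union_le W (R ∪ R.image f)
    have h2 := Finset.card_union_le R (R.image f)
    have h3 : #(R.image f) ≤ #R := Finset.card_image_le
    simp only [U]
    omega
  have hWU : W ⊆ U := Finset.subset_union_left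
  have hUf : ∀ v ∈ U, f v ∈ U := by
    intro v hv
    simp only [U, Finset.mem_union, Finset.mem_image] at hv ⊢
    rcases hv with h | h | ⟨w, h, rfl⟩
    · exact Or.inl (hWf v h)
    · exact Or.inr (Or.inr ⟨v, h, rfl⟩)
    · rw [hf w]; exact Or.inr (Or.inl h)
  have hUf' : ∀ v, v ∉ U → f v ∉ U := by
    intro v hv h
    apply hv
    have := hUf _ h
    rwa [hf v] at this
  have hne : ∀ v, v ∉ U → f v ≠ v := fun v hv h => hv (hWU (hfix v h))
  have hUe : Even #U := by
    have h1 : Even #(Uᶜ) := even_of_invol _ f hf (fun v hv => by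
      simp only [Finset.mem_compl] at hv ⊢
      exact hUf' v hv) (fun v hv => hne v (by simpa using hv))
    have h2 := Finset.card_add_card_compl U
    rw [← h2] at hV
    exact (Nat.even_add.1 hV).2 h1
  have hdeg : ∀ v, κ ≤ #{w ∈ U | G.Adj v w} ∨ ∀ w, G.Adj v w → w ∈ U := by
    intro v
    by_cases hv : v ∈ B
    · have hRU : Rv v ⊆ U := by
        intro w hw
        apply Finset.mem_union_right
        apply Finset.mem_union_left
        exact Finset.mem_biUnion.2 ⟨v, hv, hw⟩
      by_cases hk : κ ≤ #{w | G.Adj v w}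
      · left
        have h1 := hRvc v
        rw [min_eq_left hk] at h1
        rw [← h1]
        apply Finset.card_le_card
        intro w hw
        have := hRv v hw
        simp only [Finset.mem_filter, Finset.mem_univ, true_and] at this
        exact Finset.mem_filter.2 ⟨hRU hw, this⟩
      · right
        have h1 := hRvc v
        rw [min_eq_right (by omega)] at h1
        have h2 := Finset.eq_of_subset_of_card_le (hRv v) h1.ge
        intro w hw
        apply hRU
        rw [h2]
        simp [hw]
    · left
      simp only [B, Finset.mem_filter, Finset.mem_univ, true_and, not_lt] at hv
      exact hv.trans (Finset.card_le_card (Finset.filter_subset_filter _ hWU))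
  have hκ : 2 ≤ κ := by omega
  have h3a : 3 * a ≤ #U := by
    have := Finset.card_le_card hWU
    have : a * 2 ≤ a * κ := Nat.mul_le_mul_left _ hκ
    omega
  obtain ⟨fU, hfU, hfUa⟩ := pm_on G a D κ hG ha hDκ U hUe h3a hdeg
  let f' : V → V := fun v => if h : v ∈ U then (fU ⟨v, h⟩ : V) else f v
  have hin : ∀ v (h : v ∈ U), f' v = (fU ⟨v, h⟩ : V) := fun v h => dif_pos h
  have hout : ∀ v (h : v ∉ U), f' v = f v := fun v h => dif_neg h
  refine ⟨f', ?_, ?_, ?_⟩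
  · intro v
    by_cases h : v ∈ U
    · rw [hin v h, hin _ (fU ⟨v, h⟩).2]
      simp [hfU ⟨v, h⟩]
    · rw [hout v h, hout _ (hUf' v h), hf v]
  · intro v
    by_cases h : v ∈ U
    · rw [hin v h]; exact hfUa ⟨v, h⟩
    · rw [hout v h]; exact hfa v (hne v h)
  · have h1 : #(Uᶜ) ≤ #{v | f v ≠ v ∧ f' v = f v} := by
      apply Finset.card_le_card
      intro v hv
      simp only [Finset.mem_compl] at hv
      simp only [Finset.mem_filter, Finset.mem_univ, true_and]
      exact ⟨hne v hv, hout v hv⟩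
    have h2 := Finset.card_add_card_compl U
    omega

theorem det_main {V : Type*} [Fintype V] (G : SimpleGraph V) (a D κ k m q r : ℕ)
    (hG : Good G a D κ) (ha : 1 ≤ a) (hDκ : 2 * D + 2 ≤ κ) (hr : 1 ≤ r)
    (c : Sym2 V → Fin r) (hV : Fintype.card V = 2 * m) (hk : k ≤ m) (hq : 2 * m ≤ q * a)
    (hnum : (r + 1) * k + r * q + 2 ^ r * (2 ^ r * (3 * a)) ≤ 2 * m)
    (hnum2 : a * (κ + 2) ≤ 2 * m) :
    ∃ i : Fin r, ∃ M : G.Subgraph, M.IsPerfectMatching ∧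
      k ≤ ({e ∈ M.edgeSet | c e = i}.ncard) + a * (2 * κ + 2) := by
  obtain ⟨i, f, hf, hfa, hfix⟩ := mono_matching G r hr c a k m q hG.hole ha hV hk hq hnum
  obtain ⟨Z, _, hZ⟩ := Finset.exists_subset_card_eq (s := (Finset.univ : Finset V))
    (n := a * (κ + 2)) (by rw [Finset.card_univ, hV]; exact hnum2)
  let W : Finset V := ({v | f v = v} : Finset V) ∪ (Z ∪ Z.image f)
  have hWc : #W ≤ (2 * m - 2 * k) + 2 * (a * (κ + 2)) := by
    have h1 := Finset.card_union_le ({v | f v = v} : Finset V) (Z ∪ Z.image f)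
    have h2 := Finset.card_union_le Z (Z.image f)
    have h3 : #(Z.image f) ≤ #Z := Finset.card_image_le
    simp only [W]
    omega
  obtain ⟨f', hf', hfa', hcnt⟩ := extend_matching G a D κ hG ha hDκ (by rw [hV]; simp) f hf
    (fun v hv => (hfa v hv).1) W
    (by intro v hv; apply Finset.mem_union_left; simp [hv])
    (by
      intro v hv
      simp only [W, Finset.mem_union, Finset.mem_image, Finset.mem_filter, Finset.mem_univ,
        true_and] at hv ⊢
      rcases hv with h | h | ⟨w, h, rfl⟩
      · left; rw [h, h]
      · exact Or.inr (Or.inr ⟨v, h, rfl⟩)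
      · rw [hf w]; exact Or.inr (Or.inl h))
    (by
      rw [← hZ]
      apply Finset.card_le_card
      intro v hv
      exact Finset.mem_union_right _ (Finset.mem_union_left _ hv))
  let M : G.Subgraph :=
    { verts := Set.univ
      Adj := fun x y => f' x = y
      adj_sub := by rintro x y rfl; exact hfa' x
      edge_vert := by intros; trivial
      symm := ⟨by rintro x y rfl; exact hf' x⟩ }
  refine ⟨i, M, ⟨?_, fun v => trivial⟩, ?_⟩
  · intro v _
    exact ⟨f' v, rfl, fun y hy => Eq.symm hy⟩
  · let C : Finset V := {v | f v ≠ v ∧ f' v = f v}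
    have h1 : #C ≤ 2 * #(C.image (fun v => s(v, f' v))) := by
      apply Finset.card_le_mul_card_image
      intro e he
      obtain ⟨v, hv, rfl⟩ := Finset.mem_image.1 he
      refine (Finset.card_le_card (t := {v, f' v}) ?_).trans Finset.card_le_two
      intro w hw
      simp only [Finset.mem_filter, Sym2.eq_iff] at hw
      simp only [Finset.mem_insert, Finset.mem_singleton]
      tauto
    have h2 : #(C.image (fun v => s(v, f' v))) ≤ ({e ∈ M.edgeSet | c e = i}.ncard) := by
      rw [← Set.ncard_coe_finset]
      apply Set.ncard_le_ncard _ (Set.toFinite _)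
      intro e he
      obtain ⟨v, hv, rfl⟩ := Finset.mem_image.1 (Finset.mem_coe.1 he)
      simp only [C, Finset.mem_filter, Finset.mem_univ, true_and] at hv
      refine ⟨?_, ?_⟩
      · rw [SimpleGraph.Subgraph.mem_edgeSet]
      · have := (hfa v hv.1).2
        rw [hv.2]; exact this
    have h3 : #C = #{v | f v ≠ v ∧ f' v = f v} := rfl
    have h4 : a * (2 * κ + 2) = a * κ + a * (κ + 2) := by ring
    rw [hV] at hcnt
    omega
end PMC

namespace PMC
open Finset
open scoped Classical

lemma prod_two {n : ℕ} (p t : ℝ) (T : Finset (Sym2 (Fin n))) (hT : T ⊆ topE n) :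
    ∏ e ∈ topE n, (1 - p + p * (if e ∈ T then t else 1)) = (1 - p + p * t) ^ #T := by
  have : ∀ e, (1 - p + p * (if e ∈ T then t else 1)) = if e ∈ T then (1 - p + p * t) else 1 := by
    intro e; split_ifs <;> ring
  simp_rw [this]
  rw [Finset.prod_ite_mem, Finset.inter_eq_right.2 hT, Finset.prod_const]

lemma prod_ed {n : ℕ} (G : SimpleGraph (Fin n)) (t : ℝ) (T : Finset (Sym2 (Fin n))) :
    ∏ e ∈ ed G, (if e ∈ T then t else 1) = t ^ #(ed G ∩ T) := by
  rw [Finset.prod_ite_mem, Finset.prod_const]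

noncomputable def star {n : ℕ} (v : Fin n) : Finset (Sym2 (Fin n)) :=
  (univ.erase v).image (fun w => s(v, w))

lemma star_card {n : ℕ} (v : Fin n) : #(star v) = n - 1 := by
  unfold star
  rw [Finset.card_image_of_injective, Finset.card_erase_of_mem (mem_univ _)]
  · simp
  · intro a b h
    simp at h
    rcases h with h | ⟨h, h'⟩
    · exact h
    · rw [h', h]

lemma mem_star {n : ℕ} (v : Fin n) (e : Sym2 (Fin n)) :
    e ∈ star v ↔ ∃ w, w ≠ v ∧ e = s(v, w) := by
  simp [star, eq_comm]

lemma star_sub {n : ℕ} (v : Fin n) : star v ⊆ topE n := by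
  intro e he
  obtain ⟨w, hw, rfl⟩ := (mem_star v e).1 he
  rw [mem_topE]
  simpa using hw.symm

lemma iso_bound (n : ℕ) (p : ℝ) (h0 : 0 ≤ p) (h1 : p ≤ 1) :
    gnpProb n p (fun G => ¬ ∀ v, ∃ w, G.Adj v w) ≤ n * (1 - p) ^ (n - 1) := by
  refine (gnp_union n p h0 h1 _ (univ : Finset (Fin n)) (fun _ => 1)
    (fun v e => if e ∈ star v then 0 else 1) (by simp) ?_ ?_).trans ?_
  · intro v _ e; split_ifs <;> norm_num
  · intro G hG
    push Not at hG
    obtain ⟨v, hv⟩ := hG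
    refine ⟨v, mem_univ _, ?_⟩
    rw [prod_ed]
    have : ed G ∩ star v = ∅ := by
      rw [← Finset.disjoint_iff_inter_eq_empty, Finset.disjoint_left]
      intro e he he'
      obtain ⟨w, hw, rfl⟩ := (mem_star v e).1 he'
      rw [mem_ed, SimpleGraph.mem_edgeSet] at he
      exact hv w he
    rw [this]; simp
  · simp_rw [prod_two p 0 _ (star_sub _), star_card]
    simp

noncomputable def bip {n : ℕ} (X Y : Finset (Fin n)) : Finset (Sym2 (Fin n)) :=
  (X ×ˢ Y).image (fun z => s(z.1, z.2))

lemma bip_card {n : ℕ} (X Y : Finset (Fin n)) (h : Disjoint X Y) : #(bip X Y) = #X * #Y := by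
  unfold bip
  rw [Finset.card_image_of_injOn, Finset.card_product]
  rintro ⟨a, b⟩ hab ⟨c, d⟩ hcd h'
  simp only [coe_product, Set.mem_prod, mem_coe] at hab hcd
  simp only [Sym2.eq_iff] at h'
  rcases h' with ⟨rfl, rfl⟩ | ⟨rfl, rfl⟩
  · rfl
  · exact absurd hcd.2 (Finset.disjoint_left.1 h hab.1)

lemma bip_sub {n : ℕ} (X Y : Finset (Fin n)) (h : Disjoint X Y) : bip X Y ⊆ topE n := by
  intro e he
  obtain ⟨⟨a, b⟩, hab, rfl⟩ := Finset.mem_image.1 he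
  rw [mem_topE]
  simp only [Finset.mem_product] at hab
  simp only [Sym2.mk_isDiag_iff]
  rintro rfl
  exact Finset.disjoint_left.1 h hab.1 hab.2

lemma hole_bound (n : ℕ) (p : ℝ) (h0 : 0 ≤ p) (h1 : p ≤ 1) (a : ℕ) :
    gnpProb n p (fun G => ¬ NoHole G a) ≤ ((n.choose a : ℕ) : ℝ) ^ 2 * (1 - p) ^ (a * a) := by
  have hp : 0 ≤ 1 - p := by linarith
  let J : Finset (Finset (Fin n) × Finset (Fin n)) :=
    (powersetCard a univ ×ˢ powersetCard a univ).filter (fun z => Disjoint z.1 z.2)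
  refine (gnp_union n p h0 h1 _ J (fun _ => 1)
    (fun z e => if e ∈ bip z.1 z.2 then 0 else 1) (by simp) ?_ ?_).trans ?_
  · intro v _ e; split_ifs <;> norm_num
  · intro G hG
    unfold NoHole at hG
    push Not at hG
    obtain ⟨X, Y, hX, hY, hd, hn⟩ := hG
    obtain ⟨X', hX', hXc⟩ := Finset.exists_subset_card_eq hX
    obtain ⟨Y', hY', hYc⟩ := Finset.exists_subset_card_eq hY
    refine ⟨(X', Y'), ?_, ?_⟩
    · simp only [J, mem_filter, mem_product, mem_powersetCard, subset_univ, true_and]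
      exact ⟨⟨hXc, hYc⟩, Finset.disjoint_of_subset_left hX' (Finset.disjoint_of_subset_right hY' hd)⟩
    · rw [prod_ed]
      have : ed G ∩ bip X' Y' = ∅ := by
        rw [← Finset.disjoint_iff_inter_eq_empty, Finset.disjoint_left]
        intro e he he'
        obtain ⟨⟨x, y⟩, hw, rfl⟩ := Finset.mem_image.1 he'
        rw [mem_ed, SimpleGraph.mem_edgeSet] at he
        simp only [Finset.mem_product] at hw
        exact hn x (hX' hw.1) y (hY' hw.2) he
      rw [this]; simp
  · calc _ ≤ ∑ j ∈ J, (1 - p) ^ (a * a) := by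
          refine Finset.sum_le_sum fun z hz => ?_
          simp only [J, mem_filter, mem_product, mem_powersetCard, subset_univ, true_and] at hz
          rw [prod_two p 0 _ (bip_sub _ _ hz.2), bip_card _ _ hz.2, hz.1.1, hz.1.2]
          simp
      _ = #J * (1 - p) ^ (a * a) := by simp
      _ ≤ _ := by
          gcongr
          have : #J ≤ (n.choose a) ^ 2 := by
            refine (Finset.card_filter_le _ _).trans ?_
            rw [Finset.card_product, Finset.card_powersetCard]
            simp [sq]
          exact_mod_cast this

noncomputable def ins {n : ℕ} (Y : Finset (Fin n)) : Finset (Sym2 (Fin n)) :=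
  Y.offDiag.image (Sym2.mk.uncurry)

lemma mem_ins {n : ℕ} (Y : Finset (Fin n)) (e) :
    e ∈ ins Y ↔ ∃ a b, a ∈ Y ∧ b ∈ Y ∧ a ≠ b ∧ s(a, b) = e := by
  simp [ins, Finset.mem_offDiag, and_assoc]

lemma ins_sub {n : ℕ} (Y : Finset (Fin n)) : ins Y ⊆ topE n := by
  intro e he
  obtain ⟨a, b, _, _, h, rfl⟩ := (mem_ins Y e).1 he
  rw [mem_topE]; simpa using h

lemma ins_card {n : ℕ} (Y : Finset (Fin n)) : #(ins Y) = (#Y).choose 2 := by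
  unfold ins
  exact Sym2.card_image_offDiag Y

lemma handshake {n : ℕ} (G : SimpleGraph (Fin n)) (Y : Finset (Fin n)) :
    ∑ y ∈ Y, #{z ∈ Y | G.Adj y z} ≤ 2 * #(ed G ∩ ins Y) := by
  have h1 : ∑ y ∈ Y, #{z ∈ Y | G.Adj y z} = #((Y ×ˢ Y).filter (fun z => G.Adj z.1 z.2)) := by
    rw [Finset.card_filter, Finset.sum_product]
    refine Finset.sum_congr rfl fun y _ => ?_
    rw [Finset.card_filter]
  rw [h1]
  have h2 := Finset.card_le_mul_card_image (f := fun z : Fin n × Fin n => s(z.1, z.2))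
    ((Y ×ˢ Y).filter (fun z => G.Adj z.1 z.2)) 2 (by
      intro e he
      obtain ⟨⟨a, b⟩, _, rfl⟩ := Finset.mem_image.1 he
      refine (Finset.card_le_card (t := {(a, b), (b, a)}) ?_).trans Finset.card_le_two
      rintro ⟨c, d⟩ hw
      simp only [Finset.mem_filter, Sym2.eq_iff] at hw
      simp only [Finset.mem_insert, Finset.mem_singleton, Prod.mk.injEq]
      exact hw.2)
  refine h2.trans (Nat.mul_le_mul_left _ (Finset.card_le_card ?_))
  intro e he
  obtain ⟨⟨a, b⟩, h, rfl⟩ := Finset.mem_image.1 he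
  simp only [mem_filter, mem_product] at h
  rw [Finset.mem_inter, mem_ed, mem_ins]
  exact ⟨h.2, a, b, h.1.1, h.1.2, h.2.ne, rfl⟩

lemma sparse_bound (n : ℕ) (p : ℝ) (h0 : 0 ≤ p) (h1 : p ≤ 1) (a E : ℕ) (θ : ℕ → ℝ)
    (hθ : ∀ s, 1 ≤ s → s ≤ 4 * a → 1 ≤ θ s) :
    gnpProb n p (fun G => ¬ ∀ Y : Finset (Fin n), Y.Nonempty → #Y ≤ 4 * a →
      ∑ y ∈ Y, #{z ∈ Y | G.Adj y z} < (2 * E) * #Y) ≤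
    ∑ s ∈ Finset.Icc 1 (4 * a), (n.choose s : ℝ) *
      (((θ s)⁻¹) ^ (E * s) * (1 - p + p * θ s) ^ (s.choose 2)) := by
  let J : Finset (Finset (Fin n)) := (Finset.Icc 1 (4 * a)).biUnion (fun s => powersetCard s univ)
  have hJ : ∀ Y, Y ∈ J ↔ 1 ≤ #Y ∧ #Y ≤ 4 * a := by
    intro Y
    simp [J, Finset.mem_powersetCard]
  refine (gnp_union n p h0 h1 _ J (fun Y => ((θ #Y)⁻¹) ^ (E * #Y))
    (fun Y e => if e ∈ ins Y then θ #Y else 1) ?_ ?_ ?_).trans ?_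
  · intro Y hY
    have := hθ _ ((hJ Y).1 hY).1 ((hJ Y).1 hY).2
    positivity
  · intro Y hY e
    have := hθ _ ((hJ Y).1 hY).1 ((hJ Y).1 hY).2
    split_ifs <;> linarith
  · intro G hG
    push Not at hG
    obtain ⟨Y, hne, hc, hs⟩ := hG
    have hc1 := hne.card_pos
    have := hθ _ hc1 hc
    refine ⟨Y, (hJ Y).2 ⟨hc1, hc⟩, ?_⟩
    rw [prod_ed]
    have h3 : E * #Y ≤ #(ed G ∩ ins Y) := by
      have := handshake G Y
      have e1 : 2 * E * #Y = 2 * (E * #Y) := by ring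
      omega
    have h4 : θ #Y ^ (E * #Y) ≤ θ #Y ^ #(ed G ∩ ins Y) := pow_le_pow_right₀ this h3
    have h5 : 0 < θ #Y ^ (E * #Y) := by positivity
    rw [inv_pow]
    calc (1 : ℝ) = (θ #Y ^ (E * #Y))⁻¹ * θ #Y ^ (E * #Y) := by field_simp
      _ ≤ _ := by gcongr
  · simp_rw [prod_two p _ _ (ins_sub _), ins_card]
    rw [Finset.sum_biUnion]
    · apply le_of_eq
      refine Finset.sum_congr rfl fun s _ => ?_
      rw [Finset.sum_congr rfl (g := fun _ => ((θ s)⁻¹) ^ (E * s) * (1 - p + p * θ s) ^ (s.choose 2))]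
      · simp
      · intro Y hY
        rw [(Finset.mem_powersetCard.1 hY).2]
    · intro s _ t _ hst
      exact Finset.pairwise_disjoint_powersetCard _ hst

lemma low_bound {ι : Type*} (n : ℕ) (hn : 1 ≤ n) (p : ℝ) (h0 : 0 ≤ p) (h1 : p ≤ 1) (κ q : ℕ)
    (hq : q ≤ 4)
    (J : Finset ι) (hJ : #J ≤ n ^ (q + 1)) (u v : ι → Fin n) (Q : ι → Finset (Sym2 (Fin n)))
    (huv : ∀ j ∈ J, u j ≠ v j) (hQ : ∀ j ∈ J, #(Q j) = q) (hQt : ∀ j ∈ J, Q j ⊆ topE n)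
    (P : SimpleGraph (Fin n) → Prop)
    (hP : ∀ G, P G → ∃ j ∈ J, Q j ⊆ ed G ∧ Low G κ (u j) ∧ Low G κ (v j)) :
    gnpProb n p P ≤ n * (1 + n * p) ^ 4 * 16 ^ κ * (1 - 3 / 4 * p) ^ (2 * n - 7) := by
  have hn' : (1 : ℝ) ≤ n := by exact_mod_cast hn
  let T : ι → Finset (Sym2 (Fin n)) := fun j => (star (u j) ∪ star (v j)) \ Q j
  have hTc : ∀ j ∈ J, 2 * n - 7 ≤ #(T j) := by
    intro j hj
    have h2 := Finset.le_card_sdiff (Q j) (star (u j) ∪ star (v j))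
    have h3 := Finset.card_union_add_card_inter (star (u j)) (star (v j))
    have h4 : #(star (u j) ∩ star (v j)) ≤ 1 := by
      refine (Finset.card_le_card (t := {s(u j, v j)}) ?_).trans (by simp)
      intro e he
      rw [Finset.mem_inter, mem_star, mem_star] at he
      obtain ⟨⟨w, hw, rfl⟩, w', hw', h⟩ := he
      rw [Finset.mem_singleton]
      rw [Sym2.eq_iff] at h
      rcases h with ⟨h, _⟩ | ⟨h, h'⟩
      · exact absurd h (huv j hj)
      · rw [h']
    rw [star_card, star_card] at h3
    have := hQ j hj
    simp only [T]
    omega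
  refine (gnp_union n p h0 h1 _ J (fun _ => ((n : ℝ)⁻¹) ^ q * 16 ^ κ)
    (fun j e => (if e ∈ Q j then (n : ℝ) else 1) * (if e ∈ T j then 1 / 4 else 1)) ?_ ?_ ?_).trans ?_
  · intro j _; positivity
  · intro j _ e; positivity
  · intro G hG
    obtain ⟨j, hj, hjQ, hu, hv⟩ := hP G hG
    refine ⟨j, hj, ?_⟩
    rw [Finset.prod_mul_distrib, prod_ed, prod_ed, Finset.inter_eq_right.2 hjQ, hQ j hj]
    have hs : ∀ w, Low G κ w → #(ed G ∩ star w) ≤ κ := by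
      intro w hw
      refine le_trans ?_ hw.le
      rw [← Finset.card_image_of_injective (f := fun x => s(w, x)) _ (by
        intro a b h
        simp at h
        rcases h with h | ⟨h, h'⟩
        · exact h
        · rw [h', h])]
      apply Finset.card_le_card
      intro e he
      rw [Finset.mem_inter, mem_ed, mem_star] at he
      obtain ⟨he, x, hx, rfl⟩ := he
      exact Finset.mem_image.2 ⟨x, by simpa using he, rfl⟩
    have h3 : #(ed G ∩ T j) ≤ 2 * κ := by
      have : ed G ∩ T j ⊆ (ed G ∩ star (u j)) ∪ (ed G ∩ star (v j)) := by
        intro e he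
        simp only [T, Finset.mem_inter, Finset.mem_union, Finset.mem_sdiff] at he ⊢
        tauto
      have h4 := (Finset.card_le_card this).trans (Finset.card_union_le _ _)
      have := hs _ hu
      have := hs _ hv
      omega
    have h4 : (1 / 4 : ℝ) ^ (2 * κ) ≤ (1 / 4) ^ #(ed G ∩ T j) :=
      pow_le_pow_of_le_one (by norm_num) (by norm_num) h3
    have h5 : (16 : ℝ) ^ κ * (1 / 4) ^ (2 * κ) = 1 := by
      rw [pow_mul, ← mul_pow]; norm_num
    have h6 : ((n : ℝ)⁻¹) ^ q * n ^ q = 1 := by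
      rw [← mul_pow, inv_mul_cancel₀ (by positivity), one_pow]
    calc (1 : ℝ) = (((n : ℝ)⁻¹) ^ q * n ^ q) * (16 ^ κ * (1 / 4) ^ (2 * κ)) := by rw [h5, h6]; norm_num
      _ = ((n : ℝ)⁻¹) ^ q * 16 ^ κ * (n ^ q * (1 / 4) ^ (2 * κ)) := by ring
      _ ≤ _ := by gcongr
  · have hb0 : (0 : ℝ) ≤ 1 - 3 / 4 * p := by linarith
    have hb1 : 1 - 3 / 4 * p ≤ 1 := by linarith
    have hprod : ∀ j ∈ J, ∏ e ∈ topE n, (1 - p + p * ((if e ∈ Q j then (n : ℝ) else 1) *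
        (if e ∈ T j then 1 / 4 else 1))) ≤ (1 + n * p) ^ q * (1 - 3 / 4 * p) ^ (2 * n - 7) := by
      intro j hj
      have hTt : T j ⊆ topE n := by
        intro e he
        simp only [T, Finset.mem_union, Finset.mem_sdiff] at he
        rcases he.1 with h | h
        · exact star_sub _ h
        · exact star_sub _ h
      have : ∀ e, (1 - p + p * ((if e ∈ Q j then (n : ℝ) else 1) *
        (if e ∈ T j then 1 / 4 else 1))) = (1 - p + p * (if e ∈ Q j then (n : ℝ) else 1)) *
          (1 - p + p * (if e ∈ T j then 1 / 4 else 1)) := by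
        intro e
        by_cases hq' : e ∈ Q j
        · have : e ∉ T j := by simp [T, hq']
          simp [hq', this]
        · simp [hq']
      simp_rw [this]
      rw [Finset.prod_mul_distrib, prod_two p _ _ (hQt j hj), prod_two p _ _ hTt, hQ j hj]
      have e1 : 1 - p + p * (1 / 4) = 1 - 3 / 4 * p := by ring
      rw [e1]
      have e2 := pow_le_pow_of_le_one hb0 hb1 (hTc j hj)
      have e3 : 0 ≤ 1 - p + p * n := by nlinarith
      have e4 : 1 - p + p * n ≤ 1 + n * p := by nlinarith
      gcongr
    have hX : (0 : ℝ) ≤ (1 + n * p) ^ q := by positivity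
    have hX4 : (1 + n * p) ^ q ≤ (1 + n * p) ^ 4 := pow_le_pow_right₀ (by nlinarith) hq
    have hY : (0 : ℝ) ≤ (1 - 3 / 4 * p) ^ (2 * n - 7) := by positivity
    have hJ' : (#J : ℝ) ≤ (n : ℝ) ^ (q + 1) := by exact_mod_cast hJ
    have h6 : ((n : ℝ)⁻¹) ^ q * n ^ q = 1 := by
      rw [← mul_pow, inv_mul_cancel₀ (by positivity), one_pow]
    calc _ ≤ ∑ j ∈ J, ((n : ℝ)⁻¹) ^ q * 16 ^ κ * ((1 + n * p) ^ q * (1 - 3 / 4 * p) ^ (2 * n - 7)) := by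
          refine Finset.sum_le_sum fun j hj => ?_
          have := hprod j hj
          gcongr
      _ = #J * (((n : ℝ)⁻¹) ^ q * 16 ^ κ * ((1 + n * p) ^ q * (1 - 3 / 4 * p) ^ (2 * n - 7))) := by
          simp
      _ ≤ (n : ℝ) ^ (q + 1) * (((n : ℝ)⁻¹) ^ q * 16 ^ κ * ((1 + n * p) ^ 4 * (1 - 3 / 4 * p) ^ (2 * n - 7))) := by
          gcongr
      _ = (((n : ℝ)⁻¹) ^ q * n ^ q) * (n * (1 + n * p) ^ 4 * 16 ^ κ * (1 - 3 / 4 * p) ^ (2 * n - 7)) := by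
          ring
      _ = _ := by rw [h6, one_mul]

lemma mk_top {n : ℕ} {a b : Fin n} (h : a ≠ b) : s(a, b) ∈ topE n := by
  rw [mem_topE]; simpa using h

lemma low1_bound (n : ℕ) (hn : 1 ≤ n) (p : ℝ) (h0 : 0 ≤ p) (h1 : p ≤ 1) (κ : ℕ) :
    gnpProb n p (fun G => ¬ ∀ u v, u ≠ v → Low G κ u → Low G κ v → ¬ G.Adj u v) ≤
      n * (1 + n * p) ^ 4 * 16 ^ κ * (1 - 3 / 4 * p) ^ (2 * n - 7) := by
  refine low_bound n hn p h0 h1 κ 1 (by norm_num)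
    (({z | z.1 ≠ z.2} : Finset (Fin n × Fin n))) ?_ (fun z => z.1) (fun z => z.2)
    (fun z => {s(z.1, z.2)}) ?_ ?_ ?_ _ ?_
  · refine (Finset.card_filter_le _ _).trans ?_
    simp [sq]
  · intro z hz; simpa using hz
  · intro z hz; simp
  · intro z hz
    simp only [mem_filter, mem_univ, true_and] at hz
    simpa using mk_top hz
  · intro G hG
    push Not at hG
    obtain ⟨u, v, huv, hu, hv, ha⟩ := hG
    refine ⟨(u, v), by simpa using huv, ?_, hu, hv⟩
    simpa [mem_ed] using ha

lemma low2_bound (n : ℕ) (hn : 1 ≤ n) (p : ℝ) (h0 : 0 ≤ p) (h1 : p ≤ 1) (κ : ℕ) :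
    gnpProb n p (fun G => ¬ ∀ u v w, u ≠ v → Low G κ u → Low G κ v →
      G.Adj u w → G.Adj w v → False) ≤
      n * (1 + n * p) ^ 4 * 16 ^ κ * (1 - 3 / 4 * p) ^ (2 * n - 7) := by
  refine low_bound n hn p h0 h1 κ 2 (by norm_num)
    (({z | z.1 ≠ z.2.1 ∧ z.1 ≠ z.2.2 ∧ z.2.2 ≠ z.2.1} : Finset (Fin n × Fin n × Fin n))) ?_
    (fun z => z.1) (fun z => z.2.1)
    (fun z => {s(z.1, z.2.2), s(z.2.2, z.2.1)}) ?_ ?_ ?_ _ ?_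
  · refine (Finset.card_filter_le _ _).trans ?_
    simp; apply le_of_eq; ring
  · intro z hz
    simp only [mem_filter, mem_univ, true_and] at hz
    exact hz.1
  · intro z hz
    simp only [mem_filter, mem_univ, true_and] at hz
    rw [Finset.card_pair]
    simp only [ne_eq, Sym2.eq_iff]
    tauto
  · intro z hz
    simp only [mem_filter, mem_univ, true_and] at hz
    intro e he
    simp only [mem_insert, mem_singleton] at he
    rcases he with rfl | rfl
    · exact mk_top hz.2.1
    · exact mk_top hz.2.2
  · intro G hG
    push Not at hG
    obtain ⟨u, v, w, huv, hu, hv, ha, hb, _⟩ := hG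
    refine ⟨(u, v, w), ?_, ?_, hu, hv⟩
    · simp only [mem_filter, mem_univ, true_and]
      exact ⟨huv, ha.ne, hb.ne⟩
    · intro e he
      simp only [mem_insert, mem_singleton] at he
      rw [mem_ed]
      rcases he with rfl | rfl
      · exact ha
      · exact hb

lemma low4_bound (n : ℕ) (hn : 1 ≤ n) (p : ℝ) (h0 : 0 ≤ p) (h1 : p ≤ 1) (κ : ℕ) :
    gnpProb n p (fun G => ¬ ∀ u v w x z, [u, w, x, z, v].Nodup → Low G κ u → Low G κ v →
      G.Adj u w → G.Adj w x → G.Adj x z → G.Adj z v → False) ≤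
      n * (1 + n * p) ^ 4 * 16 ^ κ * (1 - 3 / 4 * p) ^ (2 * n - 7) := by
  refine low_bound n hn p h0 h1 κ 4 (by norm_num)
    (({j | [j.1, j.2.2.1, j.2.2.2.1, j.2.2.2.2, j.2.1].Nodup} :
      Finset (Fin n × Fin n × Fin n × Fin n × Fin n))) ?_
    (fun j => j.1) (fun j => j.2.1)
    (fun j => {s(j.1, j.2.2.1), s(j.2.2.1, j.2.2.2.1), s(j.2.2.2.1, j.2.2.2.2),
      s(j.2.2.2.2, j.2.1)}) ?_ ?_ ?_ _ ?_
  · refine (Finset.card_filter_le _ _).trans ?_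
    simp; apply le_of_eq; ring
  · rintro ⟨u, v, w, x, z⟩ hz
    simp only [mem_filter, mem_univ, true_and] at hz
    simp at hz
    tauto
  · rintro ⟨u, v, w, x, z⟩ hz
    simp only [mem_filter, mem_univ, true_and] at hz
    simp at hz
    rw [Finset.card_insert_of_notMem, Finset.card_insert_of_notMem, Finset.card_pair]
    · simp only [ne_eq, Sym2.eq_iff]; tauto
    · simp only [Finset.mem_insert, Finset.mem_singleton, Sym2.eq_iff]; tauto
    · simp only [Finset.mem_insert, Finset.mem_singleton, Sym2.eq_iff]; tauto
  · rintro ⟨u, v, w, x, z⟩ hz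
    simp only [mem_filter, mem_univ, true_and] at hz
    simp at hz
    intro e he
    simp only [mem_insert, mem_singleton] at he
    rcases he with rfl | rfl | rfl | rfl <;> apply mk_top <;> tauto
  · intro G hG
    push Not at hG
    obtain ⟨u, v, w, x, z, hnd, hu, hv, ha, hb, hc, hd, _⟩ := hG
    refine ⟨(u, v, w, x, z), ?_, ?_, hu, hv⟩
    · simp only [mem_filter, mem_univ, true_and]
      exact hnd
    · intro e he
      simp only [mem_insert, mem_singleton] at he
      rw [mem_ed]
      rcases he with rfl | rfl | rfl | rfl <;> assumption
end PMC

namespace PMC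
open Finset
open scoped Classical

structure Reg (n : ℕ) (p x : ℝ) (a : ℕ) : Prop where
  hx : 65 ≤ x
  hn : (n : ℝ) = Real.exp (x ^ 6)
  hp0 : 0 ≤ p
  hp1 : p ≤ 1
  hpl : x ^ 6 ≤ n * p
  hpu : n * p ≤ 2 * x ^ 6
  a1 : n / x ^ 4 ≤ a
  a2 : a ≤ n / x ^ 4 + 1
  e1 : Real.exp 2 * x ^ 8 ≤ Real.exp (x ^ 2 / 2)
  e2 : x ^ 4 ≤ Real.exp (x ^ 2)
  e3 : 81 * x ^ 24 ≤ Real.exp (x ^ 6 / 8)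
  e4 : x ^ 8 ≤ n

lemma choose_exp (n s : ℕ) (hs : 1 ≤ s) :
    (n.choose s : ℝ) ≤ (Real.exp 1 * n / s) ^ s := by
  have h1 : (n.choose s : ℝ) ≤ (n : ℝ) ^ s / (s.factorial : ℝ) := Nat.choose_le_pow_div s n
  have h2 : (s : ℝ) ^ s / (s.factorial : ℝ) ≤ Real.exp s :=
    Real.pow_div_factorial_le_exp (s : ℝ) (by positivity) s
  have hs' : (0 : ℝ) < s := by exact_mod_cast hs
  have hf : (0 : ℝ) < s.factorial := by exact_mod_cast s.factorial_pos
  rw [div_pow, mul_pow, ← Real.exp_nat_mul, mul_one]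
  refine h1.trans ?_
  rw [div_le_div_iff₀ hf (by positivity)]
  rw [div_le_iff₀ hf] at h2
  calc (n : ℝ) ^ s * s ^ s ≤ n ^ s * (Real.exp s * s.factorial) := by gcongr
    _ = _ := by ring

lemma one_sub_pow (p : ℝ) (h1 : p ≤ 1) (k : ℕ) : (1 - p) ^ k ≤ Real.exp (-(k * p)) := by
  have h : 1 - p ≤ Real.exp (-p) := Real.one_sub_le_exp_neg p
  calc (1 - p) ^ k ≤ (Real.exp (-p)) ^ k := by
        apply pow_le_pow_left₀ (by linarith) h
    _ = _ := by rw [← Real.exp_nat_mul]; congr 1; ring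

lemma geo (δ : ℝ) (h0 : 0 ≤ δ) (h1 : δ ≤ 1 / 2) (N : ℕ) :
    ∑ s ∈ Finset.Icc 1 N, δ ^ s ≤ 2 * δ * (1 - δ ^ N) := by
  induction N with
  | zero => simp
  | succ N ih =>
    rw [Finset.sum_Icc_succ_top (by omega)]
    have : 0 ≤ δ ^ N := by positivity
    rw [pow_succ]
    nlinarith [mul_nonneg this h0, mul_nonneg (mul_nonneg this h0) (sub_nonneg.2 h1)]

variable {n a : ℕ} {p x : ℝ}

lemma Reg.iso (h : Reg n p x a) :
    gnpProb n p (fun G => ¬ ∀ v, ∃ w, G.Adj v w) ≤ Real.exp 1 * Real.exp (-(n * p - x ^ 6)) := by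
  refine (iso_bound n p h.hp0 h.hp1).trans ?_
  have h1 := one_sub_pow p h.hp1 (n - 1)
  have h2 : (n : ℝ) - 1 ≤ ((n - 1 : ℕ) : ℝ) := by
    have : n ≤ (n - 1) + 1 := by omega
    have : (n : ℝ) ≤ ((n - 1 : ℕ) : ℝ) + 1 := by exact_mod_cast this
    linarith
  calc (n : ℝ) * (1 - p) ^ (n - 1) ≤ Real.exp (x ^ 6) * Real.exp (-((n - 1 : ℕ) * p)) := by
        rw [← h.hn]; gcongr
    _ = Real.exp (x ^ 6 - (n - 1 : ℕ) * p) := by rw [← Real.exp_add]; rfl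
    _ ≤ Real.exp (1 + -(n * p - x ^ 6)) := by
        apply Real.exp_le_exp.2
        have := h.hp0
        have := h.hp1
        nlinarith
    _ = _ := Real.exp_add _ _

lemma Reg.apos (h : Reg n p x a) : 1 ≤ a := by
  have := h.hx
  have h2 : (0 : ℝ) < n := by rw [h.hn]; positivity
  have h3 : (0 : ℝ) < n / x ^ 4 := by positivity
  have : (0 : ℝ) < a := lt_of_lt_of_le h3 h.a1
  exact_mod_cast this

lemma Reg.hole (h : Reg n p x a) :
    gnpProb n p (fun G => ¬ NoHole G a) ≤ Real.exp (-(x ^ 2 / 2)) := by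
  refine (hole_bound n p h.hp0 h.hp1 a).trans ?_
  have hx := h.hx
  have hx0 : (0 : ℝ) < x := by linarith
  have ha := h.apos
  have ha' : (0 : ℝ) < a := by exact_mod_cast ha
  have h2 : (0 : ℝ) < n := by rw [h.hn]; positivity
  have hc := choose_exp n a ha
  have h1 := one_sub_pow p h.hp1 (a * a)
  have hB1 : Real.exp 1 * n / a ≤ Real.exp 1 * x ^ 4 := by
    rw [mul_div_assoc]
    have : (n : ℝ) / a ≤ x ^ 4 := by
      have h3 := h.a1
      rw [div_le_iff₀ (by positivity)] at h3 ⊢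
      linarith
    gcongr
  have hB2 : x ^ 2 ≤ p * a := by
    have h3 : p * (n / x ^ 4) ≤ p * a := mul_le_mul_of_nonneg_left h.a1 h.hp0
    have h4 : x ^ 2 ≤ p * (n / x ^ 4) := by
      rw [← mul_div_assoc, le_div_iff₀ (by positivity)]
      have := h.hpl
      nlinarith
    linarith
  calc ((n.choose a : ℕ) : ℝ) ^ 2 * (1 - p) ^ (a * a)
      ≤ ((Real.exp 1 * n / a) ^ a) ^ 2 * Real.exp (-((a * a : ℕ) * p)) := by
        gcongr
        have := h.hp1
        exact pow_nonneg (by linarith) _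
    _ ≤ ((Real.exp 1 * x ^ 4) ^ a) ^ 2 * Real.exp (a * (-(x ^ 2))) := by
        gcongr
        push_cast
        nlinarith
    _ = (Real.exp 2 * x ^ 8 * Real.exp (-(x ^ 2))) ^ a := by
        rw [Real.exp_nat_mul, ← pow_mul, mul_comm a 2, pow_mul, ← mul_pow, mul_pow (Real.exp 1),
          ← Real.exp_nat_mul]
        norm_num
        ring
    _ ≤ (Real.exp (x ^ 2 / 2) * Real.exp (-(x ^ 2))) ^ a := by
        have := h.e1
        gcongr
    _ = Real.exp (-(x ^ 2 / 2)) ^ a := by rw [← Real.exp_add]; ring_nf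
    _ ≤ Real.exp (-(x ^ 2 / 2)) := by
        apply pow_le_of_le_one (by positivity) _ (by omega)
        rw [Real.exp_le_one_iff]
        have : 0 < x ^ 2 := by positivity
        linarith

lemma Reg.sparse (h : Reg n p x a) (E : ℕ) (hE : 16 * x ^ 2 ≤ E) :
    gnpProb n p (fun G => ¬ ∀ Y : Finset (Fin n), Y.Nonempty → #Y ≤ 4 * a →
      ∑ y ∈ Y, #{z ∈ Y | G.Adj y z} < (2 * (E + 1)) * #Y) ≤ 2 * Real.exp (-(x ^ 2)) := by
  have hx := h.hx
  have hx0 : (0 : ℝ) < x := by linarith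
  have hn0 : (0 : ℝ) < n := by rw [h.hn]; positivity
  have he1 : Real.exp 1 < 2.8 := by have := Real.exp_one_lt_d9; linarith
  have he2 : 1 ≤ Real.exp 1 := by have := Real.exp_one_gt_d9; linarith
  let θ : ℕ → ℝ := fun s => 5 * Real.exp 1 * n / (s * x ^ 4)
  have hN : 4 ≤ n / x ^ 4 := by
    rw [le_div_iff₀ (by positivity)]
    have := h.e4
    have h4 : 4 ≤ x ^ 4 := by
      have := pow_le_pow_left₀ (by norm_num) hx 4
      norm_num at this
      linarith
    nlinarith
  have hθ : ∀ s, 1 ≤ s → s ≤ 4 * a → Real.exp 1 ≤ θ s := by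
    intro s hs hs'
    have h1 : (1 : ℝ) ≤ s := by exact_mod_cast hs
    have h2 : (s : ℝ) ≤ 4 * a := by exact_mod_cast hs'
    have h3 := h.a2
    have h4 : (s : ℝ) ≤ 5 * (n / x ^ 4) := by linarith
    simp only [θ]
    rw [← mul_div_assoc, le_div_iff₀ (by positivity)] at h4
    rw [le_div_iff₀ (by positivity)]
    nlinarith
  refine (sparse_bound n p h.hp0 h.hp1 a (E + 1) θ
    (fun s hs hs' => he2.trans (hθ s hs hs'))).trans ?_
  have hδ : Real.exp (-(x ^ 2)) ≤ 1 / 2 := by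
    have h1 : 2 ≤ Real.exp (x ^ 2) := by
      have := Real.add_one_le_exp (x ^ 2)
      nlinarith
    rw [Real.exp_neg, inv_le_comm₀ (by positivity) (by norm_num)]
    linarith
  have hgeo := geo _ (Real.exp_nonneg (-(x ^ 2))) hδ (4 * a)
  have hlast : 2 * Real.exp (-(x ^ 2)) * (1 - Real.exp (-(x ^ 2)) ^ (4 * a)) ≤
      2 * Real.exp (-(x ^ 2)) := by
    have : 0 ≤ Real.exp (-(x ^ 2)) ^ (4 * a) := by positivity
    have := Real.exp_nonneg (-(x ^ 2))
    nlinarith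
  refine le_trans (Finset.sum_le_sum fun s hs => ?_) (hgeo.trans hlast)
  rw [Finset.mem_Icc] at hs
  have hs1 : (1 : ℝ) ≤ s := by exact_mod_cast hs.1
  have hs0 : (0 : ℝ) < s := by linarith
  have ht := hθ s hs.1 hs.2
  have ht0 : 0 < θ s := by linarith
  have hp0 := h.hp0
  have b1 : (1 - p + p * θ s) ^ (s.choose 2) ≤ Real.exp (14 * x ^ 2) ^ s := by
    have c1 : 1 - p + p * θ s ≤ Real.exp (p * θ s) := by
      have := Real.add_one_le_exp (p * θ s); linarith
    have c0 : 0 ≤ 1 - p + p * θ s := by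
      have := h.hp1
      have : 0 ≤ p * θ s := by positivity
      linarith
    have c2 : p * θ s * s ≤ 28 * x ^ 2 := by
      have : p * θ s * s = 5 * Real.exp 1 * (n * p) / x ^ 4 := by
        simp only [θ]; field_simp
      rw [this, div_le_iff₀ (by positivity)]
      have := h.hpu
      have h6 : 0 ≤ x ^ 6 := by positivity
      have : 5 * Real.exp 1 * (n * p) ≤ 14 * (2 * x ^ 6) := by
        have h0 : 0 ≤ n * p := by positivity
        nlinarith
      calc _ ≤ _ := this
        _ = _ := by ring
    have c3 : ((s.choose 2 : ℕ) : ℝ) ≤ s * s / 2 := by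
      rw [Nat.cast_choose_two]
      nlinarith
    calc _ ≤ Real.exp (p * θ s) ^ (s.choose 2) := by gcongr
      _ = Real.exp ((s.choose 2 : ℕ) * (p * θ s)) := by rw [Real.exp_nat_mul]
      _ ≤ Real.exp (s * (14 * x ^ 2)) := by
          apply Real.exp_le_exp.2
          calc ((s.choose 2 : ℕ) : ℝ) * (p * θ s) ≤ (s * s / 2) * (p * θ s) := by gcongr
            _ = s * (p * θ s * s) / 2 := by ring
            _ ≤ s * (28 * x ^ 2) / 2 := by gcongr
            _ = _ := by ring
      _ = _ := by rw [Real.exp_nat_mul]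
  have b2 : Real.exp 1 * n / s ≤ x ^ 4 * θ s := by
    simp only [θ]
    have : x ^ 4 * (5 * Real.exp 1 * n / (s * x ^ 4)) = 5 * (Real.exp 1 * n / s) := by
      field_simp
    rw [this]
    have : 0 ≤ Real.exp 1 * n / s := by positivity
    linarith
  have b3 : (θ s)⁻¹ ^ E ≤ Real.exp (-(16 * x ^ 2)) := by
    calc (θ s)⁻¹ ^ E ≤ (Real.exp 1)⁻¹ ^ E := by gcongr
      _ = Real.exp (-E) := by
          rw [← Real.exp_neg, ← Real.exp_nat_mul]; ring_nf
      _ ≤ _ := by apply Real.exp_le_exp.2; linarith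
  calc (n.choose s : ℝ) * ((θ s)⁻¹ ^ ((E + 1) * s) * (1 - p + p * θ s) ^ s.choose 2)
      ≤ (x ^ 4 * θ s) ^ s * ((θ s)⁻¹ ^ ((E + 1) * s) * Real.exp (14 * x ^ 2) ^ s) := by
        have := (choose_exp n s hs.1).trans (pow_le_pow_left₀ (by positivity) b2 s)
        have c0 : 0 ≤ 1 - p + p * θ s := by
          have := h.hp1
          have : 0 ≤ p * θ s := by positivity
          linarith
        gcongr
    _ = (x ^ 4 * ((θ s) * (θ s)⁻¹) * (θ s)⁻¹ ^ E * Real.exp (14 * x ^ 2)) ^ s := by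
        rw [pow_mul, ← mul_pow, ← mul_pow]
        ring_nf
    _ = (x ^ 4 * (θ s)⁻¹ ^ E * Real.exp (14 * x ^ 2)) ^ s := by
        rw [mul_inv_cancel₀ ht0.ne', mul_one]
    _ ≤ (Real.exp (x ^ 2) * Real.exp (-(16 * x ^ 2)) * Real.exp (14 * x ^ 2)) ^ s := by
        have := h.e2
        gcongr
    _ = Real.exp (-(x ^ 2)) ^ s := by
        rw [← Real.exp_add, ← Real.exp_add]; ring_nf

lemma Reg.low (h : Reg n p x a) (κ : ℕ) (hκ : κ ≤ x ^ 3 + 1) :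
    n * (1 + n * p) ^ 4 * 16 ^ κ * (1 - 3 / 4 * p) ^ (2 * n - 7) ≤ Real.exp (-(x ^ 6 / 8)) := by
  have hx := h.hx
  have hx0 : (0 : ℝ) < x := by linarith
  have hp0 := h.hp0
  have hp1 := h.hp1
  have hn0 : (0 : ℝ) < n := by rw [h.hn]; positivity
  have h1 := one_sub_pow (3 / 4 * p) (by linarith) (2 * n - 7)
  have h2 : 2 * (n : ℝ) - 7 ≤ ((2 * n - 7 : ℕ) : ℝ) := by
    have : 2 * n ≤ (2 * n - 7) + 7 := by omega
    have : 2 * (n : ℝ) ≤ ((2 * n - 7 : ℕ) : ℝ) + 7 := by exact_mod_cast this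
    linarith
  have hx6 : 1 ≤ x ^ 6 := one_le_pow₀ (by linarith)
  have h3 : 1 + n * p ≤ 3 * x ^ 6 := by have := h.hpu; linarith
  have h16 : (16 : ℝ) ≤ Real.exp 3 := by
    have : Real.exp 3 = Real.exp 1 ^ 3 := by rw [← Real.exp_nat_mul]; norm_num
    rw [this]
    calc (16 : ℝ) ≤ 2.7 ^ 3 := by norm_num
      _ ≤ _ := by
        have := Real.exp_one_gt_d9
        apply pow_le_pow_left₀ (by norm_num); linarith
  have hb : 0 ≤ 1 - 3 / 4 * p := by linarith
  have hx3 : 65 ≤ x ^ 3 := by nlinarith [sq_nonneg x, mul_pos hx0 hx0]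
  have hx36 : x ^ 6 = x ^ 3 * x ^ 3 := by ring
  calc n * (1 + n * p) ^ 4 * 16 ^ κ * (1 - 3 / 4 * p) ^ (2 * n - 7)
      ≤ Real.exp (x ^ 6) * (3 * x ^ 6) ^ 4 * (Real.exp 3) ^ κ *
          Real.exp (-((2 * n - 7 : ℕ) * (3 / 4 * p))) := by
        rw [← h.hn]; gcongr
    _ = (81 * x ^ 24) * Real.exp (x ^ 6 + κ * 3 + (-((2 * n - 7 : ℕ) * (3 / 4 * p)))) := by
        rw [Real.exp_add, Real.exp_add, Real.exp_nat_mul]; ring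
    _ ≤ Real.exp (x ^ 6 / 8) * Real.exp (-(x ^ 6 / 4)) := by
        have := h.e3
        gcongr
        have h5 : (2 * (n : ℝ) - 7) * (3 / 4 * p) ≤ ((2 * n - 7 : ℕ) : ℝ) * (3 / 4 * p) := by
          gcongr
        have := h.hpl
        nlinarith
    _ = _ := by rw [← Real.exp_add]; ring_nf
end PMC

namespace PMC
open Finset Filter
open scoped Classical

lemma Reg.all {n a : ℕ} {p x : ℝ} (h : Reg n p x a) (E κ : ℕ) (hE : 16 * x ^ 2 ≤ E)
    (hκ : κ ≤ x ^ 3 + 1)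
    (P : SimpleGraph (Fin n) → Prop) (hP : ∀ G, Good G a (2 * (E + 1)) κ → P G) :
    1 - (Real.exp (-(x ^ 2 / 2)) + 2 * Real.exp (-(x ^ 2)) +
      Real.exp 1 * Real.exp (-(n * p - x ^ 6)) + 3 * Real.exp (-(x ^ 6 / 8))) ≤ gnpProb n p P := by
  have hn0 : (0 : ℝ) < n := by rw [h.hn]; positivity
  have hn1 : 1 ≤ n := by exact_mod_cast hn0
  have key := gnp_or n p h.hp0 h.hp1 P
    [(fun G => ¬ NoHole G a),
      (fun G => ¬ ∀ Y : Finset (Fin n), Y.Nonempty → #Y ≤ 4 * a →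
        ∑ y ∈ Y, #{z ∈ Y | G.Adj y z} < (2 * (E + 1)) * #Y),
      (fun G => ¬ ∀ v, ∃ w, G.Adj v w),
      (fun G => ¬ ∀ u v, u ≠ v → Low G κ u → Low G κ v → ¬ G.Adj u v),
      (fun G => ¬ ∀ u v w, u ≠ v → Low G κ u → Low G κ v →
        G.Adj u w → G.Adj w v → False),
      (fun G => ¬ ∀ u v w x z, [u, w, x, z, v].Nodup → Low G κ u → Low G κ v →
        G.Adj u w → G.Adj w x → G.Adj x z → G.Adj z v → False)]
    (by
      intro G hG
      simp only [List.forall_mem_cons, not_not] at hG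
      obtain ⟨g1, g2, g3, g4, g5, g6, _⟩ := hG
      exact hP G ⟨g1, g2, g3, g4, g5, g6⟩)
  simp only [List.map_cons, List.map_nil, List.sum_cons, List.sum_nil] at key
  have b1 := h.hole
  have b2 := h.sparse E hE
  have b3 := h.iso
  have b0 := h.low κ hκ
  have b4 := (low1_bound n hn1 p h.hp0 h.hp1 κ).trans b0
  have b5 := (low2_bound n hn1 p h.hp0 h.hp1 κ).trans b0
  have b6 := (low4_bound n hn1 p h.hp0 h.hp1 κ).trans b0
  linarith

set_option maxHeartbeats 800000 in
lemma num (r : ℕ) (hr : 2 ≤ r) (ε : ℝ) (hε : 0 < ε) (m a : ℕ) (p x : ℝ)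
    (h : Reg (2 * m) p x a) (hx : 26 + 4 * r + 12 * 4 ^ r ≤ ε * x)
    (hx' : 26 + 4 * r + 12 * 4 ^ r ≤ x) (κ E : ℕ)
    (hκ1 : x ^ 3 ≤ κ) (hκ2 : κ ≤ x ^ 3 + 1) (hE2 : E ≤ 16 * x ^ 2 + 1)
    (G : SimpleGraph (Fin (2 * m))) (hG : Good G a (2 * (E + 1)) κ)
    (c : Sym2 (Fin (2 * m)) → Fin r) :
    ∃ i : Fin r, ∃ M : G.Subgraph, M.IsPerfectMatching ∧
      (1 / (r + 1 : ℝ) - ε) * (2 * m) ≤ ({e ∈ M.edgeSet | c e = i}.ncard : ℝ) := by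
  have h65 := h.hx
  have hx0 : (0 : ℝ) < x := by linarith
  have hx1 : (1 : ℝ) ≤ x := by linarith
  have hn0 : (0 : ℝ) < 2 * m := by have := h.hn; push_cast at this; rw [this]; positivity
  have ha1 := h.a1
  have ha2 := h.a2
  have he4 := h.e4
  push_cast at ha1 ha2 he4
  have hr' : (2 : ℝ) ≤ r := by exact_mod_cast hr
  -- basic sizes: t = n / x ^ 4
  set t : ℝ := 2 * m / x ^ 4 with ht
  have htx : t * x ^ 4 = 2 * m := by rw [ht]; field_simp
  have hx4 : x ≤ x ^ 4 := le_self_pow₀ hx1 (by norm_num)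
  have hx3 : x ≤ x ^ 3 := le_self_pow₀ hx1 (by norm_num)
  have htx4 : x ^ 4 ≤ t := by
    rw [ht, le_div_iff₀ (by positivity)]
    calc x ^ 4 * x ^ 4 = x ^ 8 := by ring
      _ ≤ _ := he4
  have ht1 : 1 ≤ t := by linarith
  have hat : (a : ℝ) ≤ 2 * t := by linarith
  have ht0 : 0 < t := by linarith
  have hκ0 : (κ : ℝ) ≤ 2 * x ^ 3 := by linarith
  have hbig : (a : ℝ) * (2 * κ + 2) ≤ 12 * (t * x ^ 3) := by
    have : (2 : ℝ) * κ + 2 ≤ 6 * x ^ 3 := by linarith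
    calc (a : ℝ) * (2 * κ + 2) ≤ (2 * t) * (6 * x ^ 3) := by gcongr
      _ = _ := by ring
  have htx3 : 1 ≤ t * x ^ 3 := by nlinarith
  have hεm : 26 * (t * x ^ 3) ≤ ε * (2 * m) := by
    rw [← htx]
    have h4 : (0 : ℝ) < 4 ^ r := by positivity
    have : 26 ≤ ε * x := by linarith
    calc 26 * (t * x ^ 3) ≤ (ε * x) * (t * x ^ 3) := by gcongr
      _ = _ := by ring
  have hone : 1 + (a : ℝ) * (2 * κ + 2) ≤ ε * m := by linarith
  have hnum2 : a * (κ + 2) ≤ 2 * m := by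
    have : (a : ℝ) * (κ + 2) ≤ 2 * m := by
      rw [← htx]
      have : (κ : ℝ) + 2 ≤ 4 * x ^ 3 := by linarith
      calc (a : ℝ) * (κ + 2) ≤ (2 * t) * (4 * x ^ 3) := by gcongr
        _ = t * (8 * x ^ 3) := by ring
        _ ≤ t * (x * x ^ 3) := by gcongr; linarith
        _ = _ := by ring
    exact_mod_cast this
  let q := ⌈x ^ 4⌉₊
  have hq1 : x ^ 4 ≤ q := Nat.le_ceil _
  have hq2 : (q : ℝ) ≤ x ^ 4 + 1 := (Nat.ceil_lt_add_one (by positivity)).le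
  have hq : 2 * m ≤ q * a := by
    have : (2 * m : ℝ) ≤ q * a := by
      rw [← htx, mul_comm]
      gcongr
    exact_mod_cast this
  let k := ⌊2 * m / (r + 1 : ℝ) - ε * m⌋₊
  have hk1 : 2 * m / (r + 1 : ℝ) - ε * m - 1 ≤ k := (Nat.sub_one_lt_floor _).le
  have hm0 : (0 : ℝ) < m := by linarith
  have hrest : (r : ℝ) * q + 2 ^ r * (2 ^ r * (3 * a)) ≤ ε * m ∧
      (r : ℝ) * q + 2 ^ r * (2 ^ r * (3 * a)) ≤ 2 * m := by
    have e1 : (2 : ℝ) ^ r * (2 ^ r * (3 * a)) = 3 * 4 ^ r * a := by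
      rw [show (4 : ℝ) = 2 * 2 by norm_num, mul_pow]; ring
    have e2 : (q : ℝ) ≤ 2 * t := by linarith
    have h4 : (0 : ℝ) < 4 ^ r := by positivity
    have e3 : (r : ℝ) * q + 2 ^ r * (2 ^ r * (3 * a)) ≤ (2 * r + 6 * 4 ^ r) * t := by
      rw [e1]
      calc (r : ℝ) * q + 3 * 4 ^ r * a ≤ r * (2 * t) + 3 * 4 ^ r * (2 * t) := by gcongr
        _ = _ := by ring
    have e4 : (2 * r + 6 * 4 ^ r) * t ≤ ε * m := by
      have : (4 * r + 12 * 4 ^ r) * t ≤ ε * (2 * m) := by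
        rw [← htx]
        calc (4 * r + 12 * 4 ^ r) * t ≤ (ε * x) * t := by gcongr; linarith
          _ ≤ (ε * x ^ 4) * t := by gcongr
          _ = _ := by ring
      linarith
    have e5 : (2 * r + 6 * 4 ^ r) * t ≤ 2 * m := by
      rw [← htx]
      calc (2 * r + 6 * 4 ^ r) * t ≤ x * t := by gcongr; linarith
        _ ≤ x ^ 4 * t := by gcongr
        _ = _ := by ring
    exact ⟨e3.trans e4, e3.trans e5⟩
  have hkm : (r + 1) * k + r * q + 2 ^ r * (2 ^ r * (3 * a)) ≤ 2 * m ∧ k ≤ m := by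
    rcases Nat.eq_zero_or_pos k with h0 | h0
    · rw [h0]
      refine ⟨?_, Nat.zero_le _⟩
      have := hrest.2
      rw [mul_zero, zero_add]
      exact_mod_cast this
    · have h1 := Nat.floor_pos.1 h0
      have h2 : (k : ℝ) ≤ 2 * m / (r + 1 : ℝ) - ε * m := Nat.floor_le (by linarith)
      have hem : 0 < ε * m := by positivity
      have h3 : ((r : ℝ) + 1) * k ≤ 2 * m - (r + 1) * (ε * m) := by
        calc ((r : ℝ) + 1) * k ≤ (r + 1) * (2 * m / (r + 1 : ℝ) - ε * m) := by gcongr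
          _ = _ := by field_simp
      have h4 : ((r : ℝ) + 1) * k + r * q + 2 ^ r * (2 ^ r * (3 * a)) ≤ 2 * m := by
        have h8 := hrest.1
        have h9 : ε * m ≤ (r + 1) * (ε * m) := le_mul_of_one_le_left hem.le (by linarith)
        linarith
      have h5 : (k : ℝ) ≤ m := by
        have h8 : (0 : ℝ) ≤ k := by positivity
        have h9 : 2 * (k : ℝ) ≤ (r + 1) * k := by gcongr; linarith
        have h10 : 0 ≤ ((r : ℝ) + 1) * (ε * m) := by positivity
        linarith
      exact ⟨by exact_mod_cast h4, by exact_mod_cast h5⟩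
  obtain ⟨i, M, hM, hc⟩ := det_main G a (2 * (E + 1)) κ k m q r hG h.apos (by
    have : (2 : ℝ) * (2 * (E + 1)) + 2 ≤ κ := by
      have h1 : 65 * x ^ 2 ≤ x ^ 3 := by
        calc 65 * x ^ 2 ≤ x * x ^ 2 := by gcongr
          _ = _ := by ring
      have h2 : 65 * 65 ≤ x ^ 2 := by
        calc 65 * 65 ≤ x * x := by gcongr
          _ = _ := by ring
      linarith
    exact_mod_cast this) (by omega) c (by simp) hkm.2 hq hkm.1 hnum2
  refine ⟨i, M, hM, ?_⟩
  have hc' : (k : ℝ) ≤ ({e ∈ M.edgeSet | c e = i}.ncard : ℝ) + a * (2 * κ + 2) := by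
    exact_mod_cast hc
  have : (1 / (r + 1 : ℝ) - ε) * (2 * m) = 2 * m / (r + 1 : ℝ) - 2 * (ε * m) := by ring
  rw [this]
  linarith
end PMC

namespace PMC
open Finset Filter
open scoped Classical

noncomputable def xx (n : ℕ) : ℝ := (Real.log n) ^ (1 / 6 : ℝ)
noncomputable def pp (p : ℕ → ℝ) (n : ℕ) : ℝ := min (p n) (2 * Real.log n / n)

lemma xx_tendsto : Tendsto xx atTop atTop :=
  (tendsto_rpow_atTop (by norm_num : (0 : ℝ) < 1 / 6)).comp
    (Real.tendsto_log_atTop.comp tendsto_natCast_atTop_atTop)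

lemma xx_six (n : ℕ) (_ : 1 ≤ n) : xx n ^ 6 = Real.log n := by
  have : 0 ≤ Real.log n := Real.log_natCast_nonneg n
  unfold xx
  rw [← Real.rpow_natCast, ← Real.rpow_mul this]
  norm_num

lemma ev_poly (C c : ℝ) (hc : 0 < c) (k : ℕ) :
    ∀ᶠ y : ℝ in atTop, C * y ^ k ≤ Real.exp (c * y) := by
  have h := (isLittleO_pow_exp_pos_mul_atTop (k := k) hc).const_mul_left C
  have h2 := h.bound (c := 1) one_pos
  filter_upwards [h2] with y hy
  rw [one_mul, Real.norm_eq_abs, Real.norm_eq_abs, abs_of_pos (Real.exp_pos _)] at hy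
  exact (le_abs_self _).trans hy

lemma np_tendsto (p : ℕ → ℝ)
    (hp : Tendsto (fun n : ℕ => n * p n - Real.log n) atTop atTop) :
    Tendsto (fun n : ℕ => n * pp p n - Real.log n) atTop atTop := by
  have hl : Tendsto (fun n : ℕ => Real.log n) atTop atTop :=
    Real.tendsto_log_atTop.comp tendsto_natCast_atTop_atTop
  rw [tendsto_atTop] at hp hl ⊢
  intro b
  filter_upwards [hp b, hl b, eventually_ge_atTop 1] with n h1 h2 h3
  have hn : (0 : ℝ) < n := by exact_mod_cast h3
  unfold pp
  rcases min_choice (p n) (2 * Real.log n / n) with h | h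
  · rw [h]; exact h1
  · rw [h, mul_div_cancel₀ _ hn.ne']
    linarith

lemma reg_ev (p : ℕ → ℝ) (hp01 : ∀ n, 0 ≤ p n ∧ p n ≤ 1)
    (hp : Tendsto (fun n : ℕ => n * p n - Real.log n) atTop atTop) :
    ∀ᶠ n : ℕ in atTop, Reg n (pp p n) (xx n) (⌈(n : ℝ) / xx n ^ 4⌉₊) := by
  have hx := xx_tendsto
  have hx2 : Tendsto (fun n => xx n ^ 2) atTop atTop :=
    (tendsto_pow_atTop (by norm_num)).comp hx
  have hx6 : Tendsto (fun n => xx n ^ 6) atTop atTop :=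
    (tendsto_pow_atTop (by norm_num)).comp hx
  have E1 := hx2.eventually (ev_poly (Real.exp 2) (1 / 2) (by norm_num) 4)
  have E2 := hx2.eventually (ev_poly 1 1 (by norm_num) 2)
  have E3 := hx6.eventually (ev_poly 81 (1 / 8) (by norm_num) 4)
  have E4 := hx6.eventually (ev_poly 1 1 (by norm_num) 2)
  filter_upwards [E1, E2, E3, E4, hx.eventually_ge_atTop 65, eventually_ge_atTop 1,
    (np_tendsto p hp).eventually_ge_atTop 0] with n e1 e2 e3 e4 h65 hn hnp
  have hn0 : (0 : ℝ) < n := by exact_mod_cast hn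
  have h6 := xx_six n hn
  have hn' : (n : ℝ) = Real.exp (xx n ^ 6) := by rw [h6, Real.exp_log hn0]
  have hlog : 0 ≤ Real.log n := Real.log_natCast_nonneg n
  have hx0 : 0 < xx n := by linarith
  refine ⟨h65, hn', ?_, (min_le_left _ _).trans (hp01 n).2, ?_, ?_, Nat.le_ceil _, ?_, ?_, ?_, ?_, ?_⟩
  · exact le_min (hp01 n).1 (by positivity)
  · rw [h6]; linarith
  · rw [h6]
    calc (n : ℝ) * pp p n ≤ n * (2 * Real.log n / n) := by
          gcongr; exact min_le_right _ _
      _ = _ := by field_simp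
  · exact (Nat.ceil_lt_add_one (by positivity)).le
  · calc _ = Real.exp 2 * (xx n ^ 2) ^ 4 := by ring
      _ ≤ _ := e1
      _ = _ := by ring_nf
  · calc _ = 1 * (xx n ^ 2) ^ 2 := by ring
      _ ≤ _ := e2
      _ = _ := by ring_nf
  · calc _ = 81 * (xx n ^ 6) ^ 4 := by ring
      _ ≤ _ := e3
      _ = _ := by ring_nf
  · rw [hn']
    calc _ ≤ xx n ^ 12 := pow_le_pow_right₀ (by linarith) (by norm_num)
      _ = 1 * (xx n ^ 6) ^ 2 := by ring
      _ ≤ _ := e4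
      _ = _ := by ring_nf

lemma exp_neg_tendsto {f : ℕ → ℝ} (hf : Tendsto f atTop atTop) :
    Tendsto (fun n => Real.exp (-(f n))) atTop (nhds 0) :=
  Real.tendsto_exp_neg_atTop_nhds_zero.comp hf

theorem final (r : ℕ) (hr : 2 ≤ r) (ε : ℝ) (hε : 0 < ε)
    (p : ℕ → ℝ) (hp01 : ∀ n, 0 ≤ p n ∧ p n ≤ 1)
    (hp : Filter.Tendsto
      (fun n : ℕ => n * p n - Real.log n)
      Filter.atTop Filter.atTop) :
    Filter.Tendsto
      (fun m : ℕ => gnpProb (2 * m) (p (2 * m)) (fun G =>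
        ∀ c : Sym2 (Fin (2 * m)) → Fin r, ∃ i : Fin r, ∃ M : G.Subgraph,
          M.IsPerfectMatching ∧
          (1 / (r + 1 : ℝ) - ε) * (2 * m) ≤ ({e ∈ M.edgeSet | c e = i}.ncard : ℝ)))
      Filter.atTop (nhds 1) := by
  let err : ℕ → ℝ := fun n => Real.exp (-(xx n ^ 2 / 2)) + 2 * Real.exp (-(xx n ^ 2)) +
      Real.exp 1 * Real.exp (-(n * pp p n - xx n ^ 6)) + 3 * Real.exp (-(xx n ^ 6 / 8))
  have hx := xx_tendsto
  have hx2 : Tendsto (fun n => xx n ^ 2) atTop atTop :=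
    (tendsto_pow_atTop (by norm_num)).comp hx
  have hx6 : Tendsto (fun n => xx n ^ 6) atTop atTop :=
    (tendsto_pow_atTop (by norm_num)).comp hx
  have hnp : Tendsto (fun n : ℕ => n * pp p n - xx n ^ 6) atTop atTop := by
    refine (np_tendsto p hp).congr' ?_
    filter_upwards [eventually_ge_atTop 1] with n hn
    rw [xx_six n hn]
  have herr : Tendsto err atTop (nhds 0) := by
    have t1 := exp_neg_tendsto (hx2.atTop_div_const (by norm_num : (0 : ℝ) < 2))
    have t2 := (exp_neg_tendsto hx2).const_mul 2
    have t3 := (exp_neg_tendsto hnp).const_mul (Real.exp 1)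
    have t4 := (exp_neg_tendsto (hx6.atTop_div_const (by norm_num : (0 : ℝ) < 8))).const_mul 3
    have := ((t1.add t2).add t3).add t4
    simp only [mul_zero, add_zero] at this
    exact this
  have h2m : Tendsto (fun m : ℕ => 2 * m) atTop atTop :=
    tendsto_id.const_mul_atTop' (by norm_num)
  have hlow : Tendsto (fun m : ℕ => 1 - err (2 * m)) atTop (nhds 1) := by
    simpa using (herr.comp h2m).const_sub 1
  have hεx : Tendsto (fun n => ε * xx n) atTop atTop := hx.const_mul_atTop hε
  refine tendsto_of_tendsto_of_tendsto_of_le_of_le' hlow tendsto_const_nhds ?_ ?_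
  · filter_upwards [h2m.eventually (reg_ev p hp01 hp),
      h2m.eventually (hx.eventually_ge_atTop (26 + 4 * r + 12 * 4 ^ r)),
      h2m.eventually (hεx.eventually_ge_atTop (26 + 4 * r + 12 * 4 ^ r))] with m hreg hxa hxb
    have hx0 : 0 ≤ xx (2 * m) := by have := hreg.hx; linarith
    have h1 := hreg.all ⌈16 * xx (2 * m) ^ 2⌉₊ ⌈xx (2 * m) ^ 3⌉₊ (Nat.le_ceil _)
      (Nat.ceil_lt_add_one (by positivity)).le
      (fun G => ∀ c : Sym2 (Fin (2 * m)) → Fin r, ∃ i : Fin r, ∃ M : G.Subgraph,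
          M.IsPerfectMatching ∧
          (1 / (r + 1 : ℝ) - ε) * (2 * m) ≤ ({e ∈ M.edgeSet | c e = i}.ncard : ℝ))
      (fun G hG c => num r hr ε hε m _ _ _ hreg hxb hxa _ _ (Nat.le_ceil _)
        (Nat.ceil_lt_add_one (by positivity)).le (Nat.ceil_lt_add_one (by positivity)).le G hG c)
    refine h1.trans (gnp_mono_p _ _ _ hreg.hp0 (min_le_left _ _) (hp01 _).2 _ ?_)
    intro G H hGH hG c
    obtain ⟨i, M, hM, hc⟩ := hG c
    let M' : H.Subgraph :=
      { verts := M.verts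
        Adj := M.Adj
        adj_sub := fun h => hGH (M.adj_sub h)
        edge_vert := fun h => M.edge_vert h
        symm := M.symm }
    refine ⟨i, M', ⟨hM.1, hM.2⟩, ?_⟩
    have : M'.edgeSet = M.edgeSet := by
      ext e
      induction e with
      | h a b => rfl
    rw [this]
    exact hc
  · exact Eventually.of_forall fun m => gnp_le_one _ _ (hp01 _).1 (hp01 _).2 _
end PMC

/-- **Theorem (perfect matchings with many edges of one colour).**
Let `r ≥ 2` and `ε > 0`, and let `p : ℕ → [0,1]` satisfy `n·p(n) − log n → ∞`.
Then, as `n → ∞` through even integers (`n = 2m`), whp `G ~ G(n, p(n))` is such that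
for every `r`-colouring of its edges there are a colour `i` and a perfect matching
with at least `(1/(r+1) − ε)·n` edges of colour `i`. -/
theorem perfect_matching_many_edges_same_colour
    (r : ℕ) (hr : 2 ≤ r) (ε : ℝ) (hε : 0 < ε)
    (p : ℕ → ℝ) (hp01 : ∀ n, 0 ≤ p n ∧ p n ≤ 1)
    (hp : Filter.Tendsto
      (fun n : ℕ => n * p n - Real.log n)
      Filter.atTop Filter.atTop) :
    Filter.Tendsto
      (fun m : ℕ => gnpProb (2 * m) (p (2 * m)) (fun G =>
        ∀ c : Sym2 (Fin (2 * m)) → Fin r, ∃ i : Fin r, ∃ M : G.Subgraph,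
          M.IsPerfectMatching ∧
          (1 / (r + 1 : ℝ) - ε) * (2 * m) ≤ ({e ∈ M.edgeSet | c e = i}.ncard : ℝ)))
      Filter.atTop (nhds 1) := by
  exact PMC.final r hr ε hε p hp01 hp
end

section
/- Let r ≥ 2 be an integer, let k_1,…,k_r ≥ 1 be integers, let 0 ≤ δ ≤ 1/(2(r+1)), and set k := max{k_1,…,k_r}. Let G be a graph on n vertices with at least (1−δ)·C(n,2) edges, and suppose that (1 − (r+1)δ)·n ≥ Σ_{i=1}^{r}(k_i − 1) + k + 1. Then for every r-colouring of the edges of G there exists i ∈ {1,…,r} such that G contains a matching of size k_i all of whose edges are coloured with colour i. -/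
section helpers

variable {V : Type*}

/-- oriented-pair matchings -/
def IsM (H : SimpleGraph V) (M : Finset (V × V)) : Prop :=
  (∀ p ∈ M, H.Adj p.1 p.2) ∧
  ∀ p ∈ M, ∀ q ∈ M, p ≠ q → p.1 ≠ q.1 ∧ p.1 ≠ q.2 ∧ p.2 ≠ q.1 ∧ p.2 ≠ q.2

/-- covered vertices -/
def Cov (M : Finset (V × V)) (v : V) : Prop := ∃ p ∈ M, v = p.1 ∨ v = p.2

lemma IsM.mono {H : SimpleGraph V} {M N : Finset (V × V)} (h : IsM H M) (hs : N ⊆ M) :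
    IsM H N :=
  ⟨fun p hp => h.1 p (hs hp), fun p hp q hq => h.2 p (hs hp) q (hs hq)⟩

open Classical in
lemma IsM.ins {H : SimpleGraph V} {M : Finset (V × V)} (h : IsM H M) {a b : V}
    (hab : H.Adj a b) (ha : ¬ Cov M a) (hb : ¬ Cov M b) :
    IsM H (insert (a, b) M) ∧ (insert (a, b) M).card = M.card + 1 := by
  have hne := hab.ne
  unfold Cov at ha hb
  push Not at ha hb
  refine ⟨⟨?_, ?_⟩, ?_⟩
  · intro p hp
    rcases Finset.mem_insert.1 hp with rfl | hp
    · exact hab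
    · exact h.1 p hp
  · intro p hp q hq hpq
    rcases Finset.mem_insert.1 hp with rfl | hp <;> rcases Finset.mem_insert.1 hq with rfl | hq
    · exact absurd rfl hpq
    · exact ⟨(ha q hq).1, (ha q hq).2, (hb q hq).1, (hb q hq).2⟩
    · exact ⟨(ha p hp).1.symm, (hb p hp).1.symm, (ha p hp).2.symm, (hb p hp).2.symm⟩
    · exact h.2 p hp q hq hpq
  · apply Finset.card_insert_of_notMem
    intro hm
    exact (ha _ hm).1 rfl

open Classical in
lemma cov_ins {M : Finset (V × V)} {a b v : V} :
    Cov (insert (a, b) M) v ↔ (v = a ∨ v = b) ∨ Cov M v := by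
  simp [Cov]

open Classical in
lemma IsM.cov_erase {H : SimpleGraph V} {M : Finset (V × V)} (h : IsM H M) {p : V × V}
    (hp : p ∈ M) {v : V} : Cov (M.erase p) v ↔ (Cov M v ∧ v ≠ p.1 ∧ v ≠ p.2) := by
  constructor
  · rintro ⟨q, hq, hv⟩
    rw [Finset.mem_erase] at hq
    have := h.2 q hq.2 p hp hq.1
    refine ⟨⟨q, hq.2, hv⟩, ?_, ?_⟩ <;> rcases hv with rfl | rfl <;> tauto
  · rintro ⟨⟨q, hq, hv⟩, h1, h2⟩
    refine ⟨q, Finset.mem_erase.2 ⟨?_, hq⟩, hv⟩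
    rintro rfl
    tauto

/-- `p` in some orientation is `(x,y)` -/
def Ori (p : V × V) (x y : V) : Prop := (x = p.1 ∧ y = p.2) ∨ (x = p.2 ∧ y = p.1)

open Classical in
lemma IsM.cov_erase' {H : SimpleGraph V} {M : Finset (V × V)} (h : IsM H M) {p : V × V}
    (hp : p ∈ M) {x y : V} (ho : Ori p x y) {v : V} :
    Cov (M.erase p) v ↔ (Cov M v ∧ v ≠ x ∧ v ≠ y) := by
  rw [h.cov_erase hp]
  rcases ho with ⟨rfl, rfl⟩ | ⟨rfl, rfl⟩ <;> tauto

lemma Ori.adj {H : SimpleGraph V} {M : Finset (V × V)} (h : IsM H M) {p : V × V}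
    (hp : p ∈ M) {x y : V} (ho : Ori p x y) : H.Adj x y := by
  rcases ho with ⟨rfl, rfl⟩ | ⟨rfl, rfl⟩
  · exact h.1 p hp
  · exact (h.1 p hp).symm

lemma Ori.cov {M : Finset (V × V)} {p : V × V}
    (hp : p ∈ M) {x y : V} (ho : Ori p x y) : Cov M x ∧ Cov M y := by
  rcases ho with ⟨rfl, rfl⟩ | ⟨rfl, rfl⟩ <;>
  exact ⟨⟨p, hp, by tauto⟩, ⟨p, hp, by tauto⟩⟩

open Classical in
lemma aug1 {H : SimpleGraph V} {M : Finset (V × V)} (h : IsM H M)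
    (hmax : ∀ N, IsM H N → N.card ≤ M.card) {p : V × V} (hp : p ∈ M) {x y : V} (ho : Ori p x y)
    {u w : V} (hu : ¬ Cov M u) (hw : ¬ Cov M w) (huw : u ≠ w) (hux : H.Adj x u)
    (hwy : H.Adj y w) : False := by
  have hxy := (ho.adj h hp).ne
  have hc := ho.cov hp
  have e := h.mono (Finset.erase_subset p M)
  have ce : ∀ v, Cov (M.erase p) v ↔ _ := fun v => h.cov_erase' hp ho (v := v)
  have hxw : x ≠ w := by rintro rfl; tauto
  have hyu : y ≠ u := by rintro rfl; tauto
  obtain ⟨i1, c1⟩ := e.ins hux (by rw [ce]; tauto) (by rw [ce]; tauto)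
  obtain ⟨i2, c2⟩ := i1.ins hwy (by rw [cov_ins, ce]; tauto) (by rw [cov_ins, ce]; tauto)
  have := hmax _ i2
  have := Finset.card_erase_add_one hp
  omega

open Classical in
lemma aug2 {H : SimpleGraph V} {M : Finset (V × V)} (h : IsM H M)
    (hmax : ∀ N, IsM H N → N.card ≤ M.card) {p q : V × V} (hp : p ∈ M) (hq : q ∈ M)
    (hpq : p ≠ q) {x y x' y' : V} (ho : Ori p x y) (ho' : Ori q x' y')
    {u w : V} (hu : ¬ Cov M u) (hw : ¬ Cov M w) (huw : u ≠ w) (hux : H.Adj x u)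
    (hwx : H.Adj x' w) (hy : H.Adj y y') : False := by
  have hxy := (ho.adj h hp).ne
  have hxy' := (ho'.adj h hq).ne
  have hc := ho.cov hp
  have hc' := ho'.cov hq
  have hd : x ≠ x' ∧ x ≠ y' ∧ y ≠ x' ∧ y ≠ y' := by
    have := h.2 p hp q hq hpq
    rcases ho with ⟨rfl, rfl⟩ | ⟨rfl, rfl⟩ <;> rcases ho' with ⟨rfl, rfl⟩ | ⟨rfl, rfl⟩ <;> tauto
  have e := h.mono (Finset.erase_subset p M)
  have ce : ∀ v, Cov (M.erase p) v ↔ _ := fun v => h.cov_erase' hp ho (v := v)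
  have hq' : q ∈ M.erase p := Finset.mem_erase.2 ⟨hpq.symm, hq⟩
  have e2 := e.mono (Finset.erase_subset q _)
  have ce2 : ∀ v, Cov ((M.erase p).erase q) v ↔ _ := fun v => e.cov_erase' hq' ho' (v := v)
  have n1 : x ≠ w := by rintro rfl; tauto
  have n2 : y ≠ u := by rintro rfl; tauto
  have n3 : y ≠ w := by rintro rfl; tauto
  have n4 : x' ≠ u := by rintro rfl; tauto
  have n5 : y' ≠ u := by rintro rfl; tauto
  have n6 : y' ≠ w := by rintro rfl; tauto
  obtain ⟨i1, c1⟩ := e2.ins hux (by rw [ce2, ce]; tauto) (by rw [ce2, ce]; tauto)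
  obtain ⟨i2, c2⟩ := i1.ins hwx (by rw [cov_ins, ce2, ce]; grind) (by rw [cov_ins, ce2, ce]; grind)
  obtain ⟨i3, c3⟩ := i2.ins hy (by rw [cov_ins, cov_ins, ce2, ce]; grind)
    (by rw [cov_ins, cov_ins, ce2, ce]; grind)
  have := hmax _ i3
  have := Finset.card_erase_add_one hp
  have := Finset.card_erase_add_one hq'
  omega

lemma IsM.to_subgraph {G H : SimpleGraph V} (hle : ∀ u v, H.Adj u v → G.Adj u v)
    {M : Finset (V × V)} (h : IsM H M) :
    ∃ N : G.Subgraph, N.IsMatching ∧ N.edgeSet.ncard = M.card ∧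
      ∀ u v, N.Adj u v → H.Adj u v := by
  refine ⟨{ verts := {v | Cov M v}
            Adj := fun u v => (u, v) ∈ M ∨ (v, u) ∈ M
            adj_sub := ?_
            edge_vert := ?_
            symm := ⟨fun u v huv => huv.symm⟩ }, ?_, ?_, ?_⟩
  · rintro u v (hm | hm)
    · exact hle _ _ (h.1 _ hm)
    · exact (hle _ _ (h.1 _ hm)).symm
  · rintro u v (hm | hm)
    · exact ⟨_, hm, Or.inl rfl⟩
    · exact ⟨_, hm, Or.inr rfl⟩
  · rintro v ⟨p, hp, hv⟩
    have hne := (h.1 p hp).ne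
    rcases hv with rfl | rfl
    · refine ⟨p.2, Or.inl hp, ?_⟩
      rintro w (hw | hw)
      · by_contra hcon
        exact (h.2 _ hp _ hw (by intro he; grind)).1 rfl
      · by_contra hcon
        exact (h.2 _ hp _ hw (by intro he; grind)).2.1 rfl
    · refine ⟨p.1, Or.inr hp, ?_⟩
      rintro w (hw | hw)
      · by_contra hcon
        exact (h.2 _ hp _ hw (by intro he; grind)).2.2.1 rfl
      · by_contra hcon
        exact (h.2 _ hp _ hw (by intro he; grind)).2.2.2 rfl
  · rw [← Set.ncard_coe_finset M]
    symm
    refine Set.ncard_congr (fun p _ => s(p.1, p.2)) ?_ ?_ ?_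
    · intro p hp
      exact Or.inl hp
    · intro p q hp hq he
      by_contra hpq
      have := h.2 p hp q hq hpq
      rw [Sym2.eq_iff] at he
      tauto
    · intro e
      induction e with | _ a b
      rintro (he | he)
      · exact ⟨_, he, rfl⟩
      · exact ⟨_, he, Sym2.eq_swap⟩
  · rintro u v (hm | hm)
    · exact h.1 _ hm
    · exact (h.1 _ hm).symm

variable [Fintype V]

open Classical in
/-- number of ordered adjacent pairs avoiding S -/
noncomputable def DD (H : SimpleGraph V) (S : Finset V) : ℕ :=
  (Finset.univ.filter (fun p : V × V => H.Adj p.1 p.2 ∧ p.1 ∉ S ∧ p.2 ∉ S)).card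

open Classical in
lemma card_rel_le (P : V → V → Prop) (A : Finset V) (d : ℕ)
    (hd : ∀ a ∈ A, (Finset.univ.filter (fun v => P a v)).card ≤ d) :
    (Finset.univ.filter (fun p : V × V => p.1 ∈ A ∧ P p.1 p.2)).card ≤ A.card * d := by
  have : (Finset.univ.filter (fun p : V × V => p.1 ∈ A ∧ P p.1 p.2))
      ⊆ A.biUnion (fun a => (Finset.univ.filter (fun v => P a v)).image (fun v => (a, v))) := by
    rintro ⟨u, v⟩ hp
    simp only [Finset.mem_filter, Finset.mem_univ, true_and] at hp
    simp only [Finset.mem_biUnion, Finset.mem_image, Finset.mem_filter, Finset.mem_univ, true_and]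
    exact ⟨u, hp.1, v, hp.2, rfl⟩
  refine (Finset.card_le_card this).trans (Finset.card_biUnion_le_card_mul _ _ _ ?_)
  intro a ha
  exact Finset.card_image_le.trans (hd a ha)

open Classical in
lemma card_rel_le' (P : V → V → Prop) (A : Finset V) (d : ℕ)
    (hd : ∀ a ∈ A, (Finset.univ.filter (fun v => P a v)).card ≤ d) :
    (Finset.univ.filter (fun p : V × V => p.2 ∈ A ∧ P p.2 p.1)).card ≤ A.card * d := by
  refine le_trans (Finset.card_le_card_of_injOn Prod.swap ?_ Prod.swap_injective.injOn)
    (card_rel_le P A d hd)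
  intro p hp
  simpa using hp

open Classical in
lemma bounded {H : SimpleGraph V} (ν : ℕ) (hν : ∀ M, IsM H M → M.card ≤ ν)
    (hdeg : ∀ x, (Finset.univ.filter (fun v => H.Adj x v)).card ≤ 2 * ν) :
    DD H ∅ ≤ 4 * ν * (ν + 1) := by
  obtain ⟨M, hM, hmax⟩ : ∃ M, IsM H M ∧ ∀ N, IsM H N → N.card ≤ M.card := by
    obtain ⟨M, hM, hmax⟩ := Finset.exists_max_image
      (Finset.univ.filter (fun M : Finset (V × V) => IsM H M)) Finset.card
      ⟨∅, by simp [IsM]⟩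
    refine ⟨M, by simpa using hM, fun N hN => hmax N (by simpa using hN)⟩
  let U : V → Finset V := fun x => Finset.univ.filter (fun v => H.Adj x v ∧ ¬ Cov M v)
  have other : ∀ x, 1 < (U x).card → ∀ u, ∃ w, w ≠ u ∧ H.Adj x w ∧ ¬ Cov M w := by
    intro x hx u
    obtain ⟨w, hw, hwu⟩ := Finset.exists_mem_ne hx u
    simp only [U, Finset.mem_filter, Finset.mem_univ, true_and] at hw
    exact ⟨w, hwu, hw⟩
  let Bd : V → Prop := fun x => 1 < (U x).card
  let a : V × V → V := fun p => if Bd p.1 then p.1 else p.2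
  let y : V × V → V := fun p => if Bd p.1 then p.2 else p.1
  let bad := M.filter (fun p => Bd p.1 ∨ Bd p.2)
  let good := M.filter (fun p => ¬ (Bd p.1 ∨ Bd p.2))
  have hbg : bad.card + good.card = M.card := Finset.card_filter_add_card_filter_not _
  have hori : ∀ p, Ori p (a p) (y p) := by
    intro p
    by_cases hb : Bd p.1 <;> simp [a, y, Ori, hb]
  have ha : ∀ p ∈ bad, Bd (a p) := by
    intro p hp
    have := (Finset.mem_filter.1 hp).2
    by_cases hb : Bd p.1
    · simpa [a, hb] using hb
    · simpa [a, hb] using this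
  let A := bad.image a
  let Y := bad.image y
  let Q := good.image Prod.fst ∪ good.image Prod.snd
  have hA : A.card ≤ bad.card := Finset.card_image_le
  have hY : Y.card ≤ bad.card := Finset.card_image_le
  have hQ : Q.card ≤ 2 * good.card := by
    refine (Finset.card_union_le _ _).trans ?_
    have h1 : (good.image Prod.fst).card ≤ good.card := Finset.card_image_le
    have h2 : (good.image Prod.snd).card ≤ good.card := Finset.card_image_le
    omega
  have hcov : ∀ v, Cov M v → v ∈ A ∨ v ∈ Y ∨ v ∈ Q := by
    rintro v ⟨p, hp, hv⟩
    by_cases hb : Bd p.1 ∨ Bd p.2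
    · have hpb : p ∈ bad := Finset.mem_filter.2 ⟨hp, hb⟩
      have h1 : a p ∈ A := Finset.mem_image_of_mem _ hpb
      have h2 : y p ∈ Y := Finset.mem_image_of_mem _ hpb
      rcases hori p with ⟨e1, e2⟩ | ⟨e1, e2⟩ <;> rw [e1] at h1 <;> rw [e2] at h2 <;>
      rcases hv with rfl | rfl <;> tauto
    · have hpb : p ∈ good := Finset.mem_filter.2 ⟨hp, hb⟩
      right; right
      rcases hv with rfl | rfl
      · exact Finset.mem_union_left _ (Finset.mem_image_of_mem _ hpb)
      · exact Finset.mem_union_right _ (Finset.mem_image_of_mem _ hpb)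
  have hYU : ∀ v ∈ Y, ∀ w, H.Adj v w → Cov M w := by
    intro v hv w hvw
    by_contra hw
    obtain ⟨p, hp, rfl⟩ := Finset.mem_image.1 hv
    obtain ⟨u, hu, hau, hcu⟩ := other _ (ha p hp) w
    exact aug1 hM hmax (Finset.mem_filter.1 hp).1 (hori p) hcu hw hu hau hvw
  have hYY : ∀ v ∈ Y, ∀ w ∈ Y, ¬ H.Adj v w := by
    intro v hv w hw hvw
    obtain ⟨p, hp, rfl⟩ := Finset.mem_image.1 hv
    obtain ⟨q, hq, rfl⟩ := Finset.mem_image.1 hw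
    have hpq : p ≠ q := by rintro rfl; exact hvw.ne rfl
    obtain ⟨u, -, hau, hcu⟩ := other _ (ha p hp) (a p)
    obtain ⟨u', hu', hau', hcu'⟩ := other _ (ha q hq) u
    exact aug2 hM hmax (Finset.mem_filter.1 hp).1 (Finset.mem_filter.1 hq).1 hpq (hori p) (hori q)
      hcu hcu' hu'.symm hau hau' hvw
  have hUU : ∀ v w, ¬ Cov M v → ¬ Cov M w → ¬ H.Adj v w := by
    intro v w hv hw hvw
    obtain ⟨i, c⟩ := hM.ins hvw hv hw
    have := hmax _ i
    omega
  have hQU : ∀ q ∈ Q, (U q).card ≤ 1 := by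
    intro q hq
    by_contra hcon
    have hb : Bd q := by simpa [Bd] using hcon
    rcases Finset.mem_union.1 hq with hq | hq <;> obtain ⟨p, hp, rfl⟩ := Finset.mem_image.1 hq <;>
    exact (Finset.mem_filter.1 hp).2 (by tauto)
  have k1 := card_rel_le (fun u v => H.Adj u v) A (2 * ν) (fun x _ => hdeg x)
  have k2 := card_rel_le' (fun u v => H.Adj u v) A (2 * ν) (fun x _ => hdeg x)
  obtain ⟨P, hP⟩ : ∃ P : V → V → Prop, ∀ x v, P x v ↔ (v ∈ Y ∨ v ∈ U x) :=
    ⟨_, fun _ _ => Iff.rfl⟩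
  have hd : ∀ x ∈ Q, (Finset.univ.filter (fun v => P x v)).card ≤ bad.card + 1 := by
    intro x hx
    have hs : Finset.univ.filter (fun v => P x v) ⊆ Y ∪ U x := by
      intro v hv
      rw [Finset.mem_union, ← hP]
      exact (Finset.mem_filter.1 hv).2
    refine (Finset.card_le_card hs).trans ((Finset.card_union_le _ _).trans ?_)
    exact add_le_add hY (hQU x hx)
  have k3 := card_rel_le P Q _ hd
  have k4 := card_rel_le' P Q _ hd
  have k5 : (Q ×ˢ Q).card = Q.card * Q.card := Finset.card_product _ _
  have hsub : (Finset.univ.filter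
      (fun p : V × V => H.Adj p.1 p.2 ∧ p.1 ∉ (∅ : Finset V) ∧ p.2 ∉ (∅ : Finset V))) ⊆
      (Finset.univ.filter (fun p : V × V => p.1 ∈ A ∧ H.Adj p.1 p.2)) ∪
      ((Finset.univ.filter (fun p : V × V => p.2 ∈ A ∧ H.Adj p.2 p.1)) ∪
      ((Finset.univ.filter (fun p : V × V => p.1 ∈ Q ∧ P p.1 p.2)) ∪
      ((Finset.univ.filter (fun p : V × V => p.2 ∈ Q ∧ P p.2 p.1)) ∪ Q ×ˢ Q))) := by
    rintro ⟨u, v⟩ hp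
    simp only [Finset.mem_filter, Finset.mem_univ, true_and, Finset.notMem_empty,
      not_false_eq_true, and_true] at hp
    simp only [Finset.mem_union, Finset.mem_filter, Finset.mem_univ, true_and, Finset.mem_product,
      hP, U]
    have hp' := hp.symm
    have := hcov u
    have := hcov v
    have := hYU u
    have := hYU v
    have := hYY u
    have := hYY v
    have := hUU u v
    grind
  have k6 := (Finset.card_le_card hsub).trans <| (Finset.card_union_le _ _).trans <|
    add_le_add_right ((Finset.card_union_le _ _).trans <|
    add_le_add_right ((Finset.card_union_le _ _).trans <|
    add_le_add_right (Finset.card_union_le _ _) _) _) _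
  have hMν := hν M hM
  have l1 : A.card * (2 * ν) ≤ bad.card * (2 * ν) := Nat.mul_le_mul_right _ hA
  have l2 : Q.card * (bad.card + 1) ≤ 2 * good.card * (bad.card + 1) := Nat.mul_le_mul_right _ hQ
  have l3 : Q.card * Q.card ≤ (2 * good.card) * (2 * good.card) := Nat.mul_le_mul hQ hQ
  have l4 : DD H ∅ ≤ 4 * (bad.card * ν) + 4 * (good.card * (bad.card + good.card))
      + 4 * good.card := by
    unfold DD
    nlinarith
  have l5 : good.card * (bad.card + good.card) ≤ good.card * ν :=
    Nat.mul_le_mul_left _ (by omega)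
  have l6 : (bad.card + good.card) * ν ≤ ν * ν := Nat.mul_le_mul_right _ (by omega)
  nlinarith

open Classical in
lemma key (ν : ℕ) : ∀ (H : SimpleGraph V), (∀ M, IsM H M → M.card ≤ ν) →
    ∃ (S : Finset V) (m : ℕ), S.card + m ≤ ν ∧ ν ≤ S.card + m ∧ DD H S ≤ 4 * m * (m + 1) := by
  induction ν with
  | zero =>
    intro H hH
    refine ⟨∅, 0, by simp, by simp, ?_⟩
    refine bounded 0 hH ?_
    intro x
    by_contra hcon
    obtain ⟨w, hw⟩ := Finset.card_pos.1 (show 0 < (Finset.univ.filter (fun v => H.Adj x v)).card by omega)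
    have hw' : H.Adj x w := by simpa using hw
    obtain ⟨i, c⟩ := IsM.ins (M := ∅) (H := H) (by simp [IsM]) hw' (by simp [Cov]) (by simp [Cov])
    have := hH _ i
    omega
  | succ ν ih =>
    intro H hH
    by_cases hdeg : ∀ x, (Finset.univ.filter (fun v => H.Adj x v)).card ≤ 2 * (ν + 1)
    · exact ⟨∅, ν + 1, by simp, by simp, bounded _ hH hdeg⟩
    push Not at hdeg
    obtain ⟨x, hx⟩ := hdeg
    let H' : SimpleGraph V :=
      { Adj := fun u v => H.Adj u v ∧ u ≠ x ∧ v ≠ x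
        symm := ⟨fun u v h => ⟨h.1.symm, h.2.2, h.2.1⟩⟩
        loopless := ⟨fun u h => h.1.ne rfl⟩ }
    obtain ⟨S, m, h1, h2, h3⟩ := ih H' (by
      intro M hM
      have hM' : IsM H M := ⟨fun p hp => (hM.1 p hp).1, hM.2⟩
      have hxc : ¬ Cov M x := by
        rintro ⟨p, hp, hv⟩
        have := hM.1 p hp
        rcases hv with rfl | rfl
        · exact this.2.1 rfl
        · exact this.2.2 rfl
      have hMc := hH M hM'
      have hlt : (M.image Prod.fst ∪ M.image Prod.snd).card
          < (Finset.univ.filter (fun v => H.Adj x v)).card := by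
        have := Finset.card_union_le (M.image Prod.fst) (M.image Prod.snd)
        have h1 : (M.image Prod.fst).card ≤ M.card := Finset.card_image_le
        have h2 : (M.image Prod.snd).card ≤ M.card := Finset.card_image_le
        omega
      obtain ⟨w, hw, hw2⟩ := Finset.exists_mem_notMem_of_card_lt_card hlt
      have hw' : H.Adj x w := by simpa using hw
      obtain ⟨i, c⟩ := hM'.ins hw' hxc (by
        rintro ⟨p, hp, rfl | rfl⟩
        · exact hw2 (Finset.mem_union_left _ (Finset.mem_image_of_mem _ hp))
        · exact hw2 (Finset.mem_union_right _ (Finset.mem_image_of_mem _ hp)))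
      have := hH _ i
      omega)
    by_cases hxS : x ∈ S
    · refine ⟨S, m + 1, by omega, by omega, ?_⟩
      refine le_trans ?_ (h3.trans (by nlinarith))
      refine Finset.card_le_card ?_
      rintro ⟨u, v⟩ hp
      simp only [Finset.mem_filter, Finset.mem_univ, true_and, H'] at hp ⊢
      refine ⟨⟨hp.1, ?_, ?_⟩, hp.2⟩ <;> rintro rfl <;> tauto
    · refine ⟨insert x S, m, ?_, ?_, ?_⟩
      · rw [Finset.card_insert_of_notMem hxS]; omega
      · rw [Finset.card_insert_of_notMem hxS]; omega
      refine le_trans ?_ h3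
      refine Finset.card_le_card ?_
      rintro ⟨u, v⟩ hp
      simp only [Finset.mem_filter, Finset.mem_univ, true_and, H', Finset.mem_insert] at hp ⊢
      tauto

lemma arith (n N δ r S s X : ℝ) (hδ : 0 ≤ δ) (hr : 0 ≤ r) (hS : 0 ≤ S) (hn0 : 0 ≤ n)
    (hX : 1 ≤ X) (hKX : S + s ≤ r * X) (hN : n - s ≤ N)
    (hc : S + s + X + 1 ≤ (1 - (r + 1) * δ) * n)
    (h : N * (N - 1) ≤ δ * (n * (n - 1)) + 4 * X * S) : False := by
  have hΔ : 0 ≤ (r + 1) * δ * n := by positivity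
  have hN1 : n ≤ (r + 1) * N := by nlinarith
  have hT : S + X + 1 ≤ N - (r + 1) * δ * n := by linarith
  have h1 : δ * n * n ≤ δ * n * ((r + 1) * N) := mul_le_mul_of_nonneg_left hN1 (by positivity)
  generalize hD : (r + 1) * δ * n = D at *
  have h1' : δ * n * n ≤ D * N := by rw [← hD]; linarith
  obtain ⟨T, rfl⟩ : ∃ T, N = T + D := ⟨N - D, by ring⟩
  have hT' : S + X + 1 ≤ T := by linarith
  have h2 : (S + X + 1) * (S + X) ≤ T * (T - 1) :=
    mul_le_mul hT' (by linarith) (by linarith) (by linarith)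
  have h3 : 0 ≤ D * (T - 1) := mul_nonneg hΔ (by linarith)
  have h4 : 0 ≤ δ * n := by positivity
  nlinarith [sq_nonneg (S - X)]

end helpers

/-- **Theorem (Cockayne–Lorimer for almost complete graphs).**
Let `r ≥ 2`, `k₁,…,k_r ≥ 1`, `0 ≤ δ ≤ 1/(2(r+1))`, and `k := max kᵢ`. Let `G` be a
graph on `n` vertices with at least `(1−δ)·C(n,2)` edges, and suppose
`(1 − (r+1)δ)·n ≥ Σᵢ (kᵢ − 1) + k + 1`. Then for every `r`-colouring of the edges
of `G` there is a colour `i` such that `G` contains a matching of size `kᵢ` all of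
whose edges have colour `i`. -/
theorem matching_general
    {V : Type*} [Fintype V] (G : SimpleGraph V) (n : ℕ) (hn : Fintype.card V = n)
    (r : ℕ) (hr : 2 ≤ r) (k : Fin r → ℕ) (hk : ∀ i, 1 ≤ k i)
    (δ : ℝ) (hδ0 : 0 ≤ δ) (hδ1 : δ ≤ 1 / (2 * (r + 1)))
    (hedges : (1 - δ) * (n.choose 2 : ℝ) ≤ (G.edgeSet.ncard : ℝ))
    (hcond : (∑ i, ((k i : ℝ) - 1)) + ((Finset.univ.sup k : ℕ) : ℝ) + 1 ≤ (1 - (r + 1) * δ) * n) :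
    ∀ c : Sym2 V → Fin r, ∃ i : Fin r, ∃ M : G.Subgraph,
      M.IsMatching ∧ M.edgeSet.ncard = k i ∧ ∀ e ∈ M.edgeSet, c e = i := by
  classical
  intro c
  by_contra hcon
  push Not at hcon
  let H : Fin r → SimpleGraph V := fun i =>
    { Adj := fun u v => G.Adj u v ∧ c s(u, v) = i
      symm := ⟨fun u v h => ⟨h.1.symm, by rw [Sym2.eq_swap]; exact h.2⟩⟩
      loopless := ⟨fun u h => h.1.ne rfl⟩ }
  have hH : ∀ i, ∀ M, IsM (H i) M → M.card ≤ k i - 1 := by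
    intro i M hM
    by_contra hlt
    obtain ⟨M', hsub, hcard⟩ := Finset.exists_subset_card_eq (show k i ≤ M.card by omega)
    obtain ⟨N, hN1, hN2, hN3⟩ := (hM.mono hsub).to_subgraph (G := G) (H := H i) (fun u v h => h.1)
    obtain ⟨e, he, hce⟩ := hcon i N hN1 (hN2.trans hcard)
    induction e with | _ a b
    exact hce (hN3 a b he).2
  choose S m h1 h2 h3 using fun i => key (k i - 1) (H i) (hH i)
  let W : Finset V := (Finset.univ.biUnion S)ᶜ
  have hWc : n ≤ W.card + ∑ i, (S i).card := by
    have e1 : (Finset.univ.biUnion S).card ≤ ∑ i, (S i).card := Finset.card_biUnion_le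
    have e2 := Finset.card_add_card_compl (Finset.univ.biUnion S)
    rw [hn] at e2
    have e3 : W.card = (Finset.univ.biUnion S)ᶜ.card := rfl
    omega
  let E : Finset (V × V) := Finset.univ.filter (fun p => G.Adj p.1 p.2)
  let F : Finset (V × V) := (Finset.univ : Finset V).offDiag \ E
  have hE : E.card = 2 * G.edgeSet.ncard := by
    rw [← SimpleGraph.coe_edgeFinset, Set.ncard_coe_finset, ← SimpleGraph.sum_degrees_eq_twice_card_edges]
    simp only [E]
    rw [Finset.card_filter, ← Finset.univ_product_univ, Finset.sum_product]
    refine Finset.sum_congr rfl fun v _ => ?_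
    rw [← Finset.card_filter, ← SimpleGraph.card_neighborFinset_eq_degree,
      SimpleGraph.neighborFinset_eq_filter]
  have hEsub : E ⊆ (Finset.univ : Finset V).offDiag := by
    rintro ⟨u, v⟩ hp
    have : G.Adj u v := by simpa [E] using hp
    simpa using this.ne
  have hF : F.card + E.card = n * n - n := by
    have e := Finset.card_sdiff_add_card_eq_card hEsub
    rw [Finset.offDiag_card, Finset.card_univ, hn] at e
    exact e
  have hsub : W.offDiag ⊆ F ∪ Finset.univ.biUnion (fun i => Finset.univ.filter
      (fun p : V × V => (H i).Adj p.1 p.2 ∧ p.1 ∉ S i ∧ p.2 ∉ S i)) := by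
    rintro ⟨u, v⟩ hp
    simp only [Finset.mem_offDiag, W, Finset.mem_compl, Finset.mem_biUnion, Finset.mem_univ,
      true_and, not_exists] at hp
    by_cases hG : G.Adj u v
    · refine Finset.mem_union_right _ ?_
      simp only [Finset.mem_biUnion, Finset.mem_univ, true_and, Finset.mem_filter]
      exact ⟨c s(u, v), ⟨hG, rfl⟩, hp.1 _, hp.2.1 _⟩
    · refine Finset.mem_union_left _ ?_
      simp [F, E, hG, hp.2.2]
  have hcount : W.card * W.card - W.card ≤ F.card + ∑ i, 4 * m i * (m i + 1) := by
    rw [← Finset.offDiag_card]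
    refine (Finset.card_le_card hsub).trans ((Finset.card_union_le _ _).trans ?_)
    refine add_le_add_right (Finset.card_biUnion_le.trans ?_) _
    exact Finset.sum_le_sum fun i _ => by
      refine le_trans (le_of_eq ?_) (h3 i)
      unfold DD
      congr
  set X := Finset.univ.sup k with hXdef
  have hkX : ∀ i, k i ≤ X := fun i => Finset.le_sup (f := k) (Finset.mem_univ i)
  have hX1 : 1 ≤ X := (hk ⟨0, by omega⟩).trans (hkX _)
  have hSm : ∀ i, (m i : ℝ) + ((S i).card : ℝ) = (k i : ℝ) - 1 := by
    intro i
    have e1 := h1 i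
    have e2 := h2 i
    have e3 := hk i
    have : m i + (S i).card + 1 = k i := by omega
    rw [← this]; push_cast; ring
  have hsum : (∑ i, (m i : ℝ)) + ∑ i, ((S i).card : ℝ) = ∑ i, ((k i : ℝ) - 1) := by
    rw [← Finset.sum_add_distrib]
    exact Finset.sum_congr rfl fun i _ => hSm i
  have hK : ∑ i, ((k i : ℝ) - 1) ≤ r * (X : ℝ) := by
    have : ∑ i, ((k i : ℝ) - 1) ≤ ∑ _i : Fin r, (X : ℝ) := by
      refine Finset.sum_le_sum fun i _ => ?_
      have : (k i : ℝ) ≤ X := by exact_mod_cast hkX i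
      linarith
    simpa using this
  have hmX : ((∑ i, 4 * m i * (m i + 1) : ℕ) : ℝ) ≤ 4 * X * ∑ i, (m i : ℝ) := by
    rw [Finset.mul_sum]
    push_cast
    refine Finset.sum_le_sum fun i _ => ?_
    have e : m i + 1 ≤ X := by
      have e1 := h1 i
      have e3 := hk i
      have := hkX i
      omega
    have e' : (m i : ℝ) + 1 ≤ X := by exact_mod_cast e
    have e0 : (0 : ℝ) ≤ m i := Nat.cast_nonneg _
    nlinarith
  have hFr : (F.card : ℝ) ≤ δ * ((n : ℝ) * (n - 1)) := by
    have e1 : (F.card : ℝ) + E.card = n * n - n := by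
      have : F.card + E.card + n = n * n := by
        have := Nat.le_mul_self n
        omega
      have : (F.card : ℝ) + E.card + n = n * n := by exact_mod_cast this
      linarith
    have e2 : (E.card : ℝ) = 2 * G.edgeSet.ncard := by exact_mod_cast hE
    rw [Nat.cast_choose_two] at hedges
    nlinarith
  have hNr : (W.card : ℝ) * (W.card - 1) ≤ δ * ((n : ℝ) * (n - 1)) + 4 * X * ∑ i, (m i : ℝ) := by
    have e1 : W.card * W.card ≤ F.card + (∑ i, 4 * m i * (m i + 1)) + W.card := by omega
    have e2 : (W.card : ℝ) * W.card ≤ F.card + ((∑ i, 4 * m i * (m i + 1) : ℕ) : ℝ) + W.card := by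
      exact_mod_cast e1
    linarith
  refine arith n W.card δ r (∑ i, (m i : ℝ)) (∑ i, ((S i).card : ℝ)) X hδ0 (Nat.cast_nonneg _)
    (Finset.sum_nonneg fun i _ => Nat.cast_nonneg _) (Nat.cast_nonneg _) (by exact_mod_cast hX1)
    (by rw [hsum]; exact hK) ?_ (by rw [hsum]; exact hcond) hNr
  have : (n : ℝ) ≤ W.card + ∑ i, ((S i).card : ℝ) := by exact_mod_cast hWc
  linarith
end
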